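/- arXiv:2208.08328 — 4 statements merged into one kernel-verified Lean document; each statement's English description precedes it below -/
import Mathlib

section
/- Let (X,ρ,μ) be a space of homogeneous type with the monotone geodesic property, fix p ∈ (1,∞), and let q ∈ (1,∞). (i) If 0 ≤ γ ≤ γ' < 1, then A_q^+(γ) ⊂ A_q^+(γ'). (ii) If 0 < γ' < γ < 1, then A_q^+(γ) ⊂ A_q^+(γ'). In particular, the class A_q^+(γ) is independent of the choice of the time lag γ whenever γ ∈ (0,1). -/
/-!
Increasing the time lag shrinks `R^±(γ)` to `R^±(γ')` and changes their measures by the fixed factor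
`(1 - γ') / (1 - γ)`, so the first inclusion is immediate (`AqBound.increase`).

Decreasing the lag rests on a forward-in-time transport of `ω`-mass. By Hölder's inequality
(`IsWeight.measure_rpow_le`), the `A_q^+(γ)` condition gives
`ω(R^-(γ)) ≤ C (λ(R^-(γ)) / λ(E))^q ω(E)` for every measurable `E ⊆ R^+(γ)`. Taking for `E` the part of
`R^+(γ)` common with a cell of the same size over a nearby ball, one bounds the mass of a cell of
radius `r` by that of a neighbouring cell which is later by `τ`, where `τ` may be chosen freely in
an interval starting at `(1 + γ) r^p` of length comparable to `r^p` (`AqBound.step`).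

Let `R` have radius `l` and put `r = ε l`. The sets `R^-(γ')` and `R^+(γ')` are covered by boundedly
many cells of radius `r`, so it is enough to compare the heaviest cell `U` of the first cover, for
the weight `ω`, with the heaviest cell `V` of the second one, for the dual weight
(`IsSHT.exists_heavy_cell`). The monotone geodesic property joins the centres of `U` and `V` by about
`1 / ε` steps of size comparable to `r` (`QuasiMetric.exists_chain`). These steps cost a time about
`ε^{p-1} l^p`, which is less than the available `γ' l^p` once `ε` is small, because `p > 1`
(`exists_ratio`). The remaining time is spent without moving in space, and the step length is
adjusted so that the transported cell is exactly the lower part of the cylinder with upper part `V`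
(`exists_steps`). The `A_q^+(γ)` condition for this last cylinder concludes (`AqBound.decrease`).
-/

open MeasureTheory Set Filter
open scoped ENNReal NNReal

noncomputable section

/-- A quasi-metric on `X` with quasi-triangle constant `K0`. -/
structure QuasiMetric (X : Type*) where
  dist : X → X → ℝ
  K0 : ℝ
  one_le_K0 : 1 ≤ K0
  dist_nonneg : ∀ x y, 0 ≤ dist x y
  dist_eq_zero_iff : ∀ x y, dist x y = 0 ↔ x = y
  dist_symm : ∀ x y, dist x y = dist y x
  dist_triangle : ∀ x y z, dist x y ≤ K0 * (dist x z + dist z y)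

namespace QuasiMetric

variable {X : Type*}

/-- The `ρ`-ball `B(x,r)`. -/
def ball (d : QuasiMetric X) (x : X) (r : ℝ) : Set X := {y | d.dist x y < r}

/-- The monotone geodesic property of a quasi-metric space. -/
def MonotoneGeodesic (d : QuasiMetric X) : Prop :=
  ∃ Kt : ℝ, 0 < Kt ∧ ∀ s : ℝ, 0 < s → ∀ x y : X, s ≤ d.dist x y →
    ∃ m : ℕ, 0 < m ∧ ∃ c : ℕ → X, c 0 = x ∧ c m = y ∧
      ∀ i < m, d.dist (c i) (c (i + 1)) ≤ Kt * s ∧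
        d.dist (c (i + 1)) (c m) ≤ d.dist (c i) (c m) - s

end QuasiMetric

/-- `(X, ρ, μ)` is a space of homogeneous type: a quasi-metric space with a doubling
measure defined on a σ-algebra containing the balls, balls having positive finite measure,
infinite diameter, and no atoms. -/
structure IsSHT {X : Type*} [MeasurableSpace X] (d : QuasiMetric X) (μ : Measure X) : Prop where
  measurableSet_ball : ∀ x r, MeasurableSet (d.ball x r)
  doubling : ∃ Cμ : ℝ≥0∞, 1 ≤ Cμ ∧ Cμ < ∞ ∧
    ∀ x r, 0 < r → μ (d.ball x (2 * r)) ≤ Cμ * μ (d.ball x r)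
  ball_pos : ∀ x r, 0 < r → 0 < μ (d.ball x r)
  ball_lt_top : ∀ x r, 0 < r → μ (d.ball x r) < ∞
  diam_infinite : ∀ r : ℝ, ∃ x y : X, r < d.dist x y
  nonatomic : ∀ x, μ {x} = 0

/-- The average `⨍⁻_E f dν` of an `ℝ≥0∞`-valued function over a set. -/
def lavg {α : Type*} [MeasurableSpace α] (ν : Measure α) (E : Set α) (f : α → ℝ≥0∞) : ℝ≥0∞ :=
  (∫⁻ z in E, f z ∂ν) / ν E

variable {X : Type*} [MeasurableSpace X]

/-- The parabolic cylinder `R(x,t,l) = B(x,l) × (t - l^p, t + l^p)`. -/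
def cylinder (d : QuasiMetric X) (p : ℝ) (x : X) (t l : ℝ) : Set (X × ℝ) :=
  d.ball x l ×ˢ Ioo (t - l ^ p) (t + l ^ p)

/-- The lower part `R^-(γ) = B(x,l) × (t - l^p, t - γ l^p)` of a parabolic cylinder. -/
def cylMinus (d : QuasiMetric X) (p : ℝ) (x : X) (t l γ : ℝ) : Set (X × ℝ) :=
  d.ball x l ×ˢ Ioo (t - l ^ p) (t - γ * l ^ p)

/-- The upper part `R^+(γ) = B(x,l) × (t + γ l^p, t + l^p)` of a parabolic cylinder. -/
def cylPlus (d : QuasiMetric X) (p : ℝ) (x : X) (t l γ : ℝ) : Set (X × ℝ) :=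
  d.ball x l ×ˢ Ioo (t + γ * l ^ p) (t + l ^ p)

/-- The temporal translation `E + a` of a set `E ⊆ X × ℝ`. -/
def tShift (E : Set (X × ℝ)) (a : ℝ) : Set (X × ℝ) := {z | (z.1, z.2 - a) ∈ E}

/-- A weight on `X × ℝ`: measurable, a.e. positive and finite, and locally integrable
with respect to `λ = μ × m`. -/
structure IsWeight (d : QuasiMetric X) (μ : Measure X) (p : ℝ) (ω : X × ℝ → ℝ≥0∞) : Prop where
  measurable : Measurable ω
  ae_pos : ∀ᵐ z ∂μ.prod volume, 0 < ω z
  ae_lt_top : ∀ᵐ z ∂μ.prod volume, ω z < ∞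
  locally_integrable : ∀ z : X × ℝ, ∃ l : ℝ, 0 < l ∧
    ∫⁻ w in cylinder d p z.1 z.2 l, ω w ∂μ.prod volume < ∞

/-- The conjugate exponent `q' = q / (q - 1)`. -/
def conjExp (q : ℝ) : ℝ := q / (q - 1)

/-- The parabolic Muckenhoupt constant
`[ω]_{A_q^+(γ)} = sup_R (⨍_{R^-(γ)} ω) (⨍_{R^+(γ)} ω^{1-q'})^{q-1}`. -/
def AqPlusConst (d : QuasiMetric X) (μ : Measure X) (p γ q : ℝ) (ω : X × ℝ → ℝ≥0∞) : ℝ≥0∞ :=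
  ⨆ (x : X) (t : ℝ) (l : ℝ) (_ : 0 < l),
    lavg (μ.prod volume) (cylMinus d p x t l γ) ω *
      lavg (μ.prod volume) (cylPlus d p x t l γ) (fun z => ω z ^ (1 - conjExp q)) ^ (q - 1)

/-- The parabolic Muckenhoupt constant `[ω]_{A_q^-(γ)}`, with the roles of the lower
and upper parts interchanged. -/
def AqMinusConst (d : QuasiMetric X) (μ : Measure X) (p γ q : ℝ) (ω : X × ℝ → ℝ≥0∞) : ℝ≥0∞ :=
  ⨆ (x : X) (t : ℝ) (l : ℝ) (_ : 0 < l),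
    lavg (μ.prod volume) (cylPlus d p x t l γ) ω *
      lavg (μ.prod volume) (cylMinus d p x t l γ) (fun z => ω z ^ (1 - conjExp q)) ^ (q - 1)

/-- The parabolic Muckenhoupt class `A_q^+(γ)`. -/
def AqPlus (d : QuasiMetric X) (μ : Measure X) (p γ q : ℝ) : Set (X × ℝ → ℝ≥0∞) :=
  {ω | IsWeight d μ p ω ∧ AqPlusConst d μ p γ q ω < ∞}

/-- The parabolic Muckenhoupt class `A_q^-(γ)`. -/
def AqMinus (d : QuasiMetric X) (μ : Measure X) (p γ q : ℝ) : Set (X × ℝ → ℝ≥0∞) :=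
  {ω | IsWeight d μ p ω ∧ AqMinusConst d μ p γ q ω < ∞}

/-- An adjacent system of dyadic cubes on a space of homogeneous type (Hytönen–Kairema). -/
structure DyadicSystem (X : Type*) [MeasurableSpace X] (d : QuasiMetric X) where
  K : ℕ
  K_pos : 0 < K
  δ : ℝ
  δ_pos : 0 < δ
  δ_lt_one : δ < 1
  δ_small : 96 * d.K0 ^ 6 * δ ≤ 1
  cubes : Fin K → ℤ → Set (Set X)
  measurableSet_cubes : ∀ τ k Q, Q ∈ cubes τ k → MeasurableSet Q
  cover : ∀ τ k, ⋃₀ cubes τ k = univ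
  pairwiseDisjoint : ∀ τ k, (cubes τ k).PairwiseDisjoint id
  nested : ∀ τ (k l : ℤ), k ≤ l → ∀ Q ∈ cubes τ k, ∀ Q' ∈ cubes τ l, Q' ⊆ Q ∨ Disjoint Q' Q
  c₁ : ℝ
  C₁ : ℝ
  c₁_pos : 0 < c₁
  C₁_pos : 0 < C₁
  sandwich : ∀ τ k Q, Q ∈ cubes τ k →
    ∃ z : X, d.ball z (c₁ * δ ^ k) ⊆ Q ∧ Q ⊆ d.ball z (C₁ * δ ^ k)
  covC : ℝ
  covC_pos : 0 < covC
  ball_subset_cube : ∀ (x : X) (r : ℝ), 0 < r → ∃ τ k Q, Q ∈ cubes τ k ∧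
    d.ball x r ⊆ Q ∧ ∀ a ∈ Q, ∀ b ∈ Q, d.dist a b ≤ covC * r

/-- The parabolic rectangle `P(τ,k,α,t) = Q × (t - δ^{kp}, t + δ^{kp})`. -/
def rect {d : QuasiMetric X} (D : DyadicSystem X d) (p : ℝ) (Q : Set X) (k : ℤ) (t : ℝ) :
    Set (X × ℝ) :=
  Q ×ˢ Ioo (t - (D.δ ^ k) ^ p) (t + (D.δ ^ k) ^ p)

/-- The lower part `P^-(γ) = Q × (t - δ^{kp}, t - γ δ^{kp})` of a parabolic rectangle. -/
def rectMinus {d : QuasiMetric X} (D : DyadicSystem X d) (p : ℝ) (Q : Set X) (k : ℤ)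
    (t γ : ℝ) : Set (X × ℝ) :=
  Q ×ˢ Ioo (t - (D.δ ^ k) ^ p) (t - γ * (D.δ ^ k) ^ p)

/-- The upper part `P^+(γ) = Q × (t + γ δ^{kp}, t + δ^{kp})` of a parabolic rectangle. -/
def rectPlus {d : QuasiMetric X} (D : DyadicSystem X d) (p : ℝ) (Q : Set X) (k : ℤ)
    (t γ : ℝ) : Set (X × ℝ) :=
  Q ×ˢ Ioo (t + γ * (D.δ ^ k) ^ p) (t + (D.δ ^ k) ^ p)

/-- The parabolic maximal function `𝓜^{γ+}` related to parabolic rectangles. -/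
def maxRectPlus {d : QuasiMetric X} (D : DyadicSystem X d) (μ : Measure X) (p γ : ℝ)
    (g : X × ℝ → ℝ≥0∞) (z : X × ℝ) : ℝ≥0∞ :=
  ⨆ (τ : Fin D.K) (k : ℤ) (Q : Set X) (_ : Q ∈ D.cubes τ k) (t : ℝ) (_ : z ∈ rect D p Q k t),
    lavg (μ.prod volume) (rectPlus D p Q k t γ) g

/-- The parabolic maximal function `𝓜^{γ-}` related to parabolic rectangles. -/
def maxRectMinus {d : QuasiMetric X} (D : DyadicSystem X d) (μ : Measure X) (p γ : ℝ)
    (g : X × ℝ → ℝ≥0∞) (z : X × ℝ) : ℝ≥0∞ :=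
  ⨆ (τ : Fin D.K) (k : ℤ) (Q : Set X) (_ : Q ∈ D.cubes τ k) (t : ℝ) (_ : z ∈ rect D p Q k t),
    lavg (μ.prod volume) (rectMinus D p Q k t γ) g

/-- The parabolic maximal function `M^{γ+}` related to parabolic cylinders. -/
def maxCylPlus (d : QuasiMetric X) (μ : Measure X) (p γ : ℝ) (g : X × ℝ → ℝ≥0∞)
    (z : X × ℝ) : ℝ≥0∞ :=
  ⨆ (l : ℝ) (_ : 0 < l), lavg (μ.prod volume) (cylPlus d p z.1 z.2 l γ) g

/-- The parabolic maximal function `M^{γ-}` related to parabolic cylinders. -/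
def maxCylMinus (d : QuasiMetric X) (μ : Measure X) (p γ : ℝ) (g : X × ℝ → ℝ≥0∞)
    (z : X × ℝ) : ℝ≥0∞ :=
  ⨆ (l : ℝ) (_ : 0 < l), lavg (μ.prod volume) (cylMinus d p z.1 z.2 l γ) g

/-- The parabolic maximal function `𝓜^{γ-}ν` of a measure, related to parabolic rectangles. -/
def measMaxRectMinus {d : QuasiMetric X} (D : DyadicSystem X d) (μ : Measure X) (p γ : ℝ)
    (ν : Measure (X × ℝ)) (z : X × ℝ) : ℝ≥0∞ :=
  ⨆ (τ : Fin D.K) (k : ℤ) (Q : Set X) (_ : Q ∈ D.cubes τ k) (t : ℝ) (_ : z ∈ rect D p Q k t),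
    ν (rectMinus D p Q k t γ) / (μ.prod volume) (rectMinus D p Q k t γ)

/-- The parabolic maximal function `𝓜^{γ+}ν` of a measure, related to parabolic rectangles. -/
def measMaxRectPlus {d : QuasiMetric X} (D : DyadicSystem X d) (μ : Measure X) (p γ : ℝ)
    (ν : Measure (X × ℝ)) (z : X × ℝ) : ℝ≥0∞ :=
  ⨆ (τ : Fin D.K) (k : ℤ) (Q : Set X) (_ : Q ∈ D.cubes τ k) (t : ℝ) (_ : z ∈ rect D p Q k t),
    ν (rectPlus D p Q k t γ) / (μ.prod volume) (rectPlus D p Q k t γ)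

/-- The parabolic maximal function `M^{γ-}ν` of a measure, related to parabolic cylinders. -/
def measMaxCylMinus (d : QuasiMetric X) (μ : Measure X) (p γ : ℝ) (ν : Measure (X × ℝ))
    (z : X × ℝ) : ℝ≥0∞ :=
  ⨆ (l : ℝ) (_ : 0 < l),
    ν (cylMinus d p z.1 z.2 l γ) / (μ.prod volume) (cylMinus d p z.1 z.2 l γ)

/-- The parabolic maximal function `M^{γ+}ν` of a measure, related to parabolic cylinders. -/
def measMaxCylPlus (d : QuasiMetric X) (μ : Measure X) (p γ : ℝ) (ν : Measure (X × ℝ))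
    (z : X × ℝ) : ℝ≥0∞ :=
  ⨆ (l : ℝ) (_ : 0 < l),
    ν (cylPlus d p z.1 z.2 l γ) / (μ.prod volume) (cylPlus d p z.1 z.2 l γ)

/-- The parabolic Muckenhoupt class `A_1^+(γ)`: weights with `𝓜^{γ-}ω ≤ C ω` a.e. -/
def A1Plus {d : QuasiMetric X} (D : DyadicSystem X d) (μ : Measure X) (p γ : ℝ) :
    Set (X × ℝ → ℝ≥0∞) :=
  {ω | IsWeight d μ p ω ∧ ∃ C : ℝ≥0∞, 0 < C ∧ C < ∞ ∧
    ∀ᵐ z ∂μ.prod volume, maxRectMinus D μ p γ ω z ≤ C * ω z}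

/-- The parabolic Muckenhoupt class `A_1^-(γ)`: weights with `𝓜^{γ+}ω ≤ C ω` a.e. -/
def A1Minus {d : QuasiMetric X} (D : DyadicSystem X d) (μ : Measure X) (p γ : ℝ) :
    Set (X × ℝ → ℝ≥0∞) :=
  {ω | IsWeight d μ p ω ∧ ∃ C : ℝ≥0∞, 0 < C ∧ C < ∞ ∧
    ∀ᵐ z ∂μ.prod volume, maxRectPlus D μ p γ ω z ≤ C * ω z}

/-- `T` is bounded from `L^q(X×ℝ, ω)` to `L^{q,∞}(X×ℝ, ω)`. -/
def WeakBdd (ν : Measure (X × ℝ)) (T : (X × ℝ → ℝ≥0∞) → X × ℝ → ℝ≥0∞) (q : ℝ)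
    (ω : X × ℝ → ℝ≥0∞) : Prop :=
  ∃ C : ℝ≥0∞, 0 < C ∧ C < ∞ ∧ ∀ f : X × ℝ → ℝ≥0∞, Measurable f →
    ∫⁻ z, f z ^ q * ω z ∂ν < ∞ → ∀ ξ : ℝ≥0∞, 0 < ξ → ξ < ∞ →
      ∫⁻ z in {w | ξ < T f w}, ω z ∂ν ≤ C * ξ ^ (-q) * ∫⁻ z, f z ^ q * ω z ∂ν

/-- `T` is bounded from `L^q(X×ℝ, ω)` to `L^q(X×ℝ, ω)`. -/
def StrongBdd (ν : Measure (X × ℝ)) (T : (X × ℝ → ℝ≥0∞) → X × ℝ → ℝ≥0∞) (q : ℝ)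
    (ω : X × ℝ → ℝ≥0∞) : Prop :=
  ∃ C : ℝ≥0∞, 0 < C ∧ C < ∞ ∧ ∀ f : X × ℝ → ℝ≥0∞, Measurable f →
    ∫⁻ z, f z ^ q * ω z ∂ν < ∞ →
      ∫⁻ z, T f z ^ q * ω z ∂ν ≤ C * ∫⁻ z, f z ^ q * ω z ∂ν

/-- Local integrability of an `ℝ≥0∞`-valued function on `X × ℝ`. -/
def LocIntE (d : QuasiMetric X) (μ : Measure X) (p : ℝ) (g : X × ℝ → ℝ≥0∞) : Prop :=
  ∀ z : X × ℝ, ∃ l : ℝ, 0 < l ∧ ∫⁻ w in cylinder d p z.1 z.2 l, g w ∂μ.prod volume < ∞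

/-- Local integrability of a real-valued function on `X × ℝ`. -/
def LocIntR (d : QuasiMetric X) (μ : Measure X) (p : ℝ) (u : X × ℝ → ℝ) : Prop :=
  ∀ z : X × ℝ, ∃ l : ℝ, 0 < l ∧ IntegrableOn u (cylinder d p z.1 z.2 l) (μ.prod volume)

/-- The parabolic space `PBMO^+(X × ℝ)`. -/
def PBMOPlus (d : QuasiMetric X) (μ : Measure X) (p : ℝ) : Set (X × ℝ → ℝ) :=
  {u | LocIntR d μ p u ∧ ∃ γ : ℝ, 0 < γ ∧ γ < 1 ∧ ∃ a : X → ℝ → ℝ → ℝ, ∃ M : ℝ≥0∞, M < ∞ ∧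
    ∀ (x : X) (t l : ℝ), 0 < l →
      lavg (μ.prod volume) (cylPlus d p x t l γ)
          (fun z => ENNReal.ofReal (u z - a x t l)) +
        lavg (μ.prod volume) (cylMinus d p x t l γ)
          (fun z => ENNReal.ofReal (a x t l - u z)) ≤ M}

/-- The parabolic space `PBMO^-(X × ℝ)`. -/
def PBMOMinus (d : QuasiMetric X) (μ : Measure X) (p : ℝ) : Set (X × ℝ → ℝ) :=
  {u | LocIntR d μ p u ∧ ∃ γ : ℝ, 0 < γ ∧ γ < 1 ∧ ∃ a : X → ℝ → ℝ → ℝ, ∃ M : ℝ≥0∞, M < ∞ ∧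
    ∀ (x : X) (t l : ℝ), 0 < l →
      lavg (μ.prod volume) (cylMinus d p x t l γ)
          (fun z => ENNReal.ofReal (u z - a x t l)) +
        lavg (μ.prod volume) (cylPlus d p x t l γ)
          (fun z => ENNReal.ofReal (a x t l - u z)) ≤ M}

end

/-! ### Geometry of balls -/

namespace QuasiMetric

variable {X : Type*} (d : QuasiMetric X)

lemma dist_self (x : X) : d.dist x x = 0 := (d.dist_eq_zero_iff x x).2 rfl

lemma K0_pos : 0 < d.K0 := lt_of_lt_of_le one_pos d.one_le_K0

lemma ball_subset_ball {x y : X} {r s R : ℝ} (hxy : d.dist y x ≤ s)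
    (h : d.K0 * (r + s) ≤ R) : d.ball y r ⊆ d.ball x R := by
  intro z hz
  have hz : d.dist y z < r := hz
  have h1 := d.dist_triangle x z y
  have h2 := d.dist_symm x y
  have : d.K0 * (d.dist x y + d.dist y z) < d.K0 * (r + s) :=
    mul_lt_mul_of_pos_left (by linarith) d.K0_pos
  exact show d.dist x z < R by linarith

/-- In a space with the monotone geodesic property two points can be joined by a chain with
steps of size comparable to `s` that arrives after about `ρ(x,y) / s` steps and rests afterwards. -/
lemma exists_chain (hMG : d.MonotoneGeodesic) : ∃ K : ℝ, 1 ≤ K ∧ ∀ s : ℝ, 0 < s → ∀ x y : X,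
    ∃ c : ℕ → X, c 0 = x ∧ (∀ i, d.dist (c i) (c (i + 1)) ≤ K * s) ∧
      ∀ n : ℕ, 1 + d.dist x y / s ≤ n → c n = y := by
  obtain ⟨Kt, hKt, H⟩ := hMG
  refine ⟨max Kt 1, le_max_right _ _, fun s hs x y => ?_⟩
  have hK0 : 0 ≤ max Kt 1 * s := by positivity
  by_cases hxy : s ≤ d.dist x y
  · obtain ⟨m, -, c, h0, hm, hc⟩ := H s hs x y hxy
    have hdec : ∀ i ≤ m, d.dist (c i) (c m) ≤ d.dist x y - i * s := by
      intro i
      induction i with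
      | zero => intro _; simp [h0, hm]
      | succ k ih =>
        intro hk
        have h1 := ih (by omega)
        have h2 := (hc k (by omega)).2
        push_cast
        linarith
    have hms : (m : ℝ) ≤ d.dist x y / s := by
      have h1 := hdec m le_rfl
      rw [d.dist_self] at h1
      rw [le_div_iff₀ hs]
      linarith
    refine ⟨fun i => c (min i m), by simpa using h0, fun i => ?_, fun n hn => ?_⟩
    · rcases lt_or_ge i m with hi | hi
      · have h1 := (hc i hi).1
        have : min i m = i := by omega
        have h3 : min (i + 1) m = i + 1 := by omega
        simp only [this, h3]
        exact h1.trans (mul_le_mul_of_nonneg_right (le_max_left _ _) hs.le)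
      · have : min i m = m := by omega
        have h3 : min (i + 1) m = m := by omega
        simp only [this, h3, d.dist_self]
        exact hK0
    · have : m ≤ n := by
        have : (m : ℝ) ≤ n := by linarith
        exact_mod_cast this
      simp only [min_eq_right this, hm]
  · refine ⟨fun i => if i = 0 then x else y, by simp, fun i => ?_, fun n hn => ?_⟩
    · rcases Nat.eq_zero_or_pos i with hi | hi
      · subst hi
        simp only [if_true, zero_add, one_ne_zero, if_false]
        have : 1 * s ≤ max Kt 1 * s := mul_le_mul_of_nonneg_right (le_max_right _ _) hs.le
        linarith [not_le.1 hxy]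
      · simp only [hi.ne', Nat.succ_ne_zero, if_false, d.dist_self]
        exact hK0
    · have : n ≠ 0 := by
        rintro rfl
        have := div_nonneg (d.dist_nonneg x y) hs.le
        simp at hn
        linarith
      simp [this]

end QuasiMetric

/-! ### Doubling and coverings -/

namespace IsSHT

variable {X : Type*} [MeasurableSpace X] {d : QuasiMetric X} {μ : Measure X}

/-- Doubling for an arbitrary dilation factor `M`. -/
lemma doubling_mul (h : IsSHT d μ) (M : ℝ) : ∃ D : ℝ≥0∞, 1 ≤ D ∧ D < ∞ ∧
    ∀ x r, 0 < r → μ (d.ball x (M * r)) ≤ D * μ (d.ball x r) := by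
  obtain ⟨C, hC1, hC, H⟩ := h.doubling
  obtain ⟨k, hk⟩ := pow_unbounded_of_one_lt M (one_lt_two)
  refine ⟨C ^ k, one_le_pow₀ hC1, ENNReal.pow_lt_top hC, fun x r hr => ?_⟩
  have hpow : ∀ k : ℕ, μ (d.ball x (2 ^ k * r)) ≤ C ^ k * μ (d.ball x r) := by
    intro k
    induction k with
    | zero => simp
    | succ k ih =>
      calc μ (d.ball x (2 ^ (k + 1) * r)) = μ (d.ball x (2 * (2 ^ k * r))) := by
            congr 2; ring
        _ ≤ C * μ (d.ball x (2 ^ k * r)) := H x _ (by positivity)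
        _ ≤ C * (C ^ k * μ (d.ball x r)) := by gcongr
        _ = C ^ (k + 1) * μ (d.ball x r) := by ring
  refine le_trans (measure_mono fun z hz => ?_) (hpow k)
  exact lt_of_lt_of_le (show d.dist x z < M * r from hz) (mul_le_mul_of_nonneg_right hk.le hr.le)

/-- Balls of radius `l` are covered by a bounded number of balls of radius `ε l`: a separated set
of centres has bounded cardinality by doubling, and a maximal one gives a covering. -/
lemma exists_cover (h : IsSHT d μ) {ε : ℝ} (hε : 0 < ε) (hε1 : ε ≤ 1) : ∃ N : ℕ, ∀ x l, 0 < l →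
    ∃ F : Finset X, F.card ≤ N ∧ (∀ y ∈ F, y ∈ d.ball x l) ∧
      d.ball x l ⊆ ⋃ y ∈ F, d.ball y (ε * l) := by
  classical
  obtain ⟨D, -, hD, H⟩ := h.doubling_mul (4 * d.K0 ^ 2 * (2 * d.K0 / ε))
  have hK := d.K0_pos
  have hK1 := d.one_le_K0
  refine ⟨⌊D.toReal⌋₊, fun x l hl => ?_⟩
  -- a finite subset of the ball that is `ε l`-separated
  let P : Finset X → Prop := fun F => (∀ y ∈ F, y ∈ d.ball x l) ∧
    ∀ y ∈ F, ∀ z ∈ F, y ≠ z → ε * l ≤ d.dist y z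
  have hcard : ∀ F, P F → F.card ≤ ⌊D.toReal⌋₊ := by
    rintro F ⟨hF1, hF2⟩
    set ρ := ε * l / (2 * d.K0) with hρ
    have hρ0 : 0 < ρ := by positivity
    have hρl : ρ ≤ l := by
      rw [hρ, div_le_iff₀ (by positivity)]
      nlinarith
    have hdisj : (F : Set X).PairwiseDisjoint (fun y => d.ball y ρ) := by
      intro y hy z hz hyz
      refine Set.disjoint_left.2 fun w hw1 hw2 => ?_
      have hw1 : d.dist y w < ρ := hw1
      have hw2 : d.dist z w < ρ := hw2
      have h1 := hF2 y hy z hz hyz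
      have h2 := d.dist_triangle y z w
      rw [d.dist_symm w z] at h2
      have : d.K0 * (d.dist y w + d.dist z w) < d.K0 * (ρ + ρ) :=
        mul_lt_mul_of_pos_left (by linarith) hK
      have h3 : d.K0 * (ρ + ρ) = ε * l := by rw [hρ]; field_simp; norm_num
      linarith
    have hm0 := h.ball_pos x (2 * d.K0 * l) (by positivity)
    have hmt := h.ball_lt_top x (2 * d.K0 * l) (by positivity)
    have hsub : (⋃ y ∈ F, d.ball y ρ) ⊆ d.ball x (2 * d.K0 * l) := by
      refine Set.iUnion₂_subset fun y hy => ?_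
      have hy' : d.dist x y < l := hF1 y hy
      refine d.ball_subset_ball (s := l) (by rw [d.dist_symm]; exact hy'.le) ?_
      nlinarith
    have hlow : ∀ y ∈ F, μ (d.ball x (2 * d.K0 * l)) ≤ D * μ (d.ball y ρ) := by
      intro y hy
      have hy' : d.dist x y < l := hF1 y hy
      refine le_trans (measure_mono ?_) (H y ρ hρ0)
      refine d.ball_subset_ball (s := l) hy'.le ?_
      have : 4 * d.K0 ^ 2 * (2 * d.K0 / ε) * ρ = 4 * d.K0 ^ 2 * l := by rw [hρ]; field_simp
      rw [this]
      have : d.K0 * l ≤ d.K0 ^ 2 * l := by nlinarith [mul_pos hK hl]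
      nlinarith
    have hfin : (F.card : ℝ≥0∞) * μ (d.ball x (2 * d.K0 * l)) ≤
        D * μ (d.ball x (2 * d.K0 * l)) := by
      calc (F.card : ℝ≥0∞) * μ (d.ball x (2 * d.K0 * l))
          ≤ ∑ y ∈ F, D * μ (d.ball y ρ) := by
            rw [← nsmul_eq_mul]; exact Finset.card_nsmul_le_sum _ _ _ hlow
        _ = D * μ (⋃ y ∈ F, d.ball y ρ) := by
            rw [← Finset.mul_sum, measure_biUnion_finset hdisj
              (fun y _ => h.measurableSet_ball y ρ)]
        _ ≤ _ := by gcongr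
    have hle : (F.card : ℝ≥0∞) ≤ D := (ENNReal.mul_le_mul_iff_left hm0.ne' hmt.ne).1 hfin
    refine Nat.le_floor ?_
    have := ENNReal.toReal_mono hD.ne hle
    simpa using this
  by_contra hno
  push Not at hno
  have hall : ∀ n : ℕ, ∃ F, P F ∧ F.card = n := by
    intro n
    induction n with
    | zero => exact ⟨∅, by simp [P], rfl⟩
    | succ n ih =>
      obtain ⟨F, hF, rfl⟩ := ih
      have h1 := hno F (hcard F hF) hF.1
      obtain ⟨z, hz, hzF⟩ := Set.not_subset.1 h1
      simp only [Set.mem_iUnion, not_exists] at hzF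
      have hsep : ∀ y ∈ F, ε * l ≤ d.dist y z := fun y hy => not_lt.1 (hzF y hy)
      have hznot : z ∉ F := by
        intro hzF'
        have := hsep z hzF'
        rw [d.dist_self] at this
        nlinarith [mul_pos hε hl]
      refine ⟨insert z F, ⟨?_, ?_⟩, Finset.card_insert_of_notMem hznot⟩
      · intro y hy
        rcases Finset.mem_insert.1 hy with rfl | hy
        · exact hz
        · exact hF.1 y hy
      · intro y hy w hw hyw
        rcases Finset.mem_insert.1 hy with hy | hy <;>
          rcases Finset.mem_insert.1 hw with hw | hw
        · exact absurd (hy.trans hw.symm) hyw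
        · rw [hy, d.dist_symm]; exact hsep w hw
        · rw [hw]; exact hsep y hy
        · exact hF.2 y hy w hw hyw
  obtain ⟨F, hF, hFc⟩ := hall (⌊D.toReal⌋₊ + 1)
  have := hcard F hF
  omega

end IsSHT

/-! ### Space-time cells -/

section Cells

variable {X : Type*} {d : QuasiMetric X}

/-- The space-time cell `B(x,r) × (a, a + h)`. -/
def cell (d : QuasiMetric X) (x : X) (r a h : ℝ) : Set (X × ℝ) := d.ball x r ×ˢ Ioo a (a + h)

lemma cell_mono {x : X} {r a a' h h' : ℝ} (h1 : a' ≤ a) (h2 : a + h ≤ a' + h') :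
    cell d x r a h ⊆ cell d x r a' h' :=
  Set.prod_mono le_rfl (Ioo_subset_Ioo h1 h2)

lemma cylMinus_eq (p : ℝ) (x : X) (t l γ : ℝ) :
    cylMinus d p x t l γ = cell d x l (t - l ^ p) ((1 - γ) * l ^ p) := by
  unfold cylMinus cell
  congr 2; ring

lemma cylPlus_eq (p : ℝ) (x : X) (t l γ : ℝ) :
    cylPlus d p x t l γ = cell d x l (t - l ^ p + (1 + γ) * l ^ p) ((1 - γ) * l ^ p) := by
  unfold cylPlus cell
  congr 2 <;> ring

variable [MeasurableSpace X] {μ : Measure X}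

lemma IsSHT.measurableSet_cell (hS : IsSHT d μ) (x : X) (r a h : ℝ) :
    MeasurableSet (cell d x r a h) :=
  (hS.measurableSet_ball x r).prod measurableSet_Ioo

lemma prod_cell (x : X) (r a h : ℝ) :
    (μ.prod volume) (cell d x r a h) = μ (d.ball x r) * ENNReal.ofReal h := by
  rw [cell, Measure.prod_prod, Real.volume_Ioo, add_sub_cancel_left]

lemma prod_cell_pos (hS : IsSHT d μ) (x : X) {r a h : ℝ} (hr : 0 < r) (hh : 0 < h) :
    0 < (μ.prod volume) (cell d x r a h) := by
  rw [prod_cell]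
  exact ENNReal.mul_pos (hS.ball_pos x r hr).ne' (ENNReal.ofReal_pos.2 hh).ne'

lemma prod_cell_lt_top (hS : IsSHT d μ) (x : X) {r a h : ℝ} (hr : 0 < r) :
    (μ.prod volume) (cell d x r a h) < ∞ := by
  rw [prod_cell]
  exact ENNReal.mul_lt_top (hS.ball_lt_top x r hr) ENNReal.ofReal_lt_top

/-- A pigeonhole principle: among the boundedly many cells of proportions `ε`, `η` needed to cover
a given cell, one carries a fixed fraction of its mass, for any measure `ν`. -/
lemma IsSHT.exists_heavy_cell (hS : IsSHT d μ) {ε η : ℝ} (hε : 0 < ε) (hε1 : ε ≤ 1) (hη : 0 < η) :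
    ∃ N : ℕ, ∀ (ν : Measure (X × ℝ)) (x : X) (l α T T' : ℝ), 0 < l → 0 < T → T' ≤ T →
      ∃ y ∈ d.ball x l, ∃ a, α - η * T ≤ a ∧ a ≤ α + T ∧
        ν (cell d x l α T') ≤ N * ν (cell d y (ε * l) a (η * T)) := by
  obtain ⟨N, hN⟩ := hS.exists_cover hε hε1
  set M := ⌊2 / η⌋₊ + 1 with hM
  refine ⟨N * M, fun ν x l α T T' hl hT hT' => ?_⟩
  obtain ⟨F, hFN, hFx, hF⟩ := hN x l hl
  -- consecutive intervals overlap in half their length, so that open intervals cover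
  let τ : ℕ → ℝ := fun k => α + ((k : ℝ) - 1) * (η * T / 2)
  let G := F ×ˢ Finset.range M
  let E : X × ℕ → Set (X × ℝ) := fun i => cell d i.1 (ε * l) (τ i.2) (η * T)
  have hηT : 0 < η * T := by positivity
  have hcov : cell d x l α T' ⊆ ⋃ i ∈ G, E i := by
    rintro ⟨w, s⟩ ⟨hw, hs1, hs2⟩
    obtain ⟨y, hy, hwy⟩ := Set.mem_iUnion₂.1 (hF hw)
    simp only at hs1 hs2
    have hnn : 0 ≤ (s - α) / (η * T / 2) := div_nonneg (by linarith) (by linarith)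
    set k := ⌊(s - α) / (η * T / 2)⌋₊ with hk
    have hk1 : (k : ℝ) * (η * T / 2) ≤ s - α := by
      rw [← le_div_iff₀ (by linarith)]; exact Nat.floor_le hnn
    have hk2 : s - α < ((k : ℝ) + 1) * (η * T / 2) := by
      rw [← div_lt_iff₀ (by linarith)]; exact Nat.lt_floor_add_one _
    have hkM : k < M := by
      rw [hM, Nat.lt_succ_iff]
      refine Nat.floor_le_floor ?_
      rw [div_le_div_iff₀ (by linarith) hη]
      nlinarith
    refine Set.mem_iUnion₂.2 ⟨(y, k), Finset.mem_product.2 ⟨hy, Finset.mem_range.2 hkM⟩, hwy, ?_, ?_⟩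
    · change α + ((k : ℝ) - 1) * (η * T / 2) < s
      nlinarith
    · change s < α + ((k : ℝ) - 1) * (η * T / 2) + η * T
      nlinarith
  have hGne : G.Nonempty := by
    have hx : x ∈ d.ball x l := by
      change d.dist x x < l
      rw [d.dist_self]; exact hl
    obtain ⟨y, hy, -⟩ := Set.mem_iUnion₂.1 (hF hx)
    exact ⟨(y, 0), Finset.mem_product.2 ⟨hy, Finset.mem_range.2 (by omega)⟩⟩
  obtain ⟨⟨y, k⟩, hyk, hmax⟩ := Finset.exists_max_image G (fun i => ν (E i)) hGne
  obtain ⟨hy, hk⟩ := Finset.mem_product.1 hyk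
  have hkM : (k : ℝ) ≤ 2 / η := by
    have h1 : k ≤ ⌊2 / η⌋₊ := Nat.lt_succ_iff.1 (Finset.mem_range.1 hk)
    exact (Nat.le_floor_iff (by positivity)).1 h1
  refine ⟨y, hFx y hy, τ k, ?_, ?_, ?_⟩
  · have : 0 ≤ (k : ℝ) * (η * T / 2) := by positivity
    change _ ≤ α + ((k : ℝ) - 1) * (η * T / 2)
    nlinarith
  · have h2 : (k : ℝ) * (η * T / 2) ≤ 2 / η * (η * T / 2) :=
      mul_le_mul_of_nonneg_right hkM (by linarith)
    have h3 : 2 / η * (η * T / 2) = T := by field_simp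
    change α + ((k : ℝ) - 1) * (η * T / 2) ≤ _
    nlinarith
  · calc ν (cell d x l α T') ≤ ∑ i ∈ G, ν (E i) :=
          (measure_mono hcov).trans (measure_biUnion_finset_le _ _)
      _ ≤ G.card • ν (E (y, k)) := Finset.sum_le_card_nsmul _ _ _ hmax
      _ = (G.card : ℝ≥0∞) * ν (E (y, k)) := nsmul_eq_mul _ _
      _ ≤ ((N * M : ℕ) : ℝ≥0∞) * ν (E (y, k)) := by
          gcongr
          rw [Finset.card_product, Finset.card_range]
          exact Nat.mul_le_mul_right _ hFN

end Cells

/-! ### Weights and the Muckenhoupt condition -/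

section Weights

variable {X : Type*} {d : QuasiMetric X}

variable [MeasurableSpace X] {μ : Measure X}

/-- The weighted measure `ω dλ`. -/
noncomputable def wMeas (μ : Measure X) (ω : X × ℝ → ℝ≥0∞) : Measure (X × ℝ) := (μ.prod volume).withDensity ω

/-- The dual weight `ω^{1-q'}`. -/
noncomputable def dualWeight (q : ℝ) (ω : X × ℝ → ℝ≥0∞) : X × ℝ → ℝ≥0∞ := fun z => ω z ^ (1 - conjExp q)

/-- The condition `A_q^+(γ)` with constant `C`, with averages replaced by integrals and the cylinders
indexed by their lower end point `a = t - l^p` in time. -/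
def AqBound (d : QuasiMetric X) (μ : Measure X) (p γ q : ℝ) (ω : X × ℝ → ℝ≥0∞) (C : ℝ≥0∞) : Prop :=
  ∀ (x : X) (a l : ℝ), 0 < l →
    wMeas μ ω (cell d x l a ((1 - γ) * l ^ p)) *
        wMeas μ (dualWeight q ω) (cell d x l (a + (1 + γ) * l ^ p) ((1 - γ) * l ^ p)) ^ (q - 1) ≤
      C * (μ (d.ball x l) * ENNReal.ofReal ((1 - γ) * l ^ p)) ^ q

lemma div_mul_div_rpow_le_iff {w s L C : ℝ≥0∞} {q : ℝ} (hq : 1 < q) (hL0 : L ≠ 0) (hLt : L ≠ ∞) :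
    w / L * (s / L) ^ (q - 1) ≤ C ↔ w * s ^ (q - 1) ≤ C * L ^ q := by
  have h1 : w / L * (s / L) ^ (q - 1) = w * s ^ (q - 1) / L ^ q := by
    have : L ^ q = L * L ^ (q - 1) := by
      conv_rhs => rw [← ENNReal.rpow_one L, ENNReal.rpow_one L]
      nth_rewrite 2 [← ENNReal.rpow_one L]
      rw [← ENNReal.rpow_add _ _ hL0 hLt]
      congr 1; ring
    rw [ENNReal.div_rpow_of_nonneg _ _ (by linarith : (0 : ℝ) ≤ q - 1), this, div_eq_mul_inv,
      div_eq_mul_inv, div_eq_mul_inv, ENNReal.mul_inv (Or.inl hL0) (Or.inl hLt)]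
    ring
  rw [h1, ENNReal.div_le_iff (by simp [hL0, hLt]) 
    (ENNReal.rpow_ne_top_of_nonneg (by linarith) hLt)]

lemma mem_AqPlus_iff (hS : IsSHT d μ) {p γ q : ℝ} (hγ : γ < 1) (hq : 1 < q)
    {ω : X × ℝ → ℝ≥0∞} :
    ω ∈ AqPlus d μ p γ q ↔ IsWeight d μ p ω ∧ ∃ C < ∞, AqBound d μ p γ q ω C := by
  have key : ∀ (C : ℝ≥0∞) (x : X) (t l : ℝ), 0 < l →
      (lavg (μ.prod volume) (cylMinus d p x t l γ) ω *
        lavg (μ.prod volume) (cylPlus d p x t l γ) (fun z => ω z ^ (1 - conjExp q)) ^ (q - 1) ≤ C ↔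
      wMeas μ ω (cell d x l (t - l ^ p) ((1 - γ) * l ^ p)) *
        wMeas μ (dualWeight q ω)
          (cell d x l (t - l ^ p + (1 + γ) * l ^ p) ((1 - γ) * l ^ p)) ^ (q - 1) ≤
      C * (μ (d.ball x l) * ENNReal.ofReal ((1 - γ) * l ^ p)) ^ q) := by
    intro C x t l hl
    have hlp : 0 < (1 - γ) * l ^ p := mul_pos (by linarith) (Real.rpow_pos_of_pos hl p)
    have hpos := prod_cell_pos hS x (a := 0) hl hlp
    have hfin := prod_cell_lt_top hS x (a := 0) (h := (1 - γ) * l ^ p) hl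
    rw [prod_cell] at hpos hfin
    rw [cylMinus_eq, cylPlus_eq, lavg, lavg, prod_cell, prod_cell,
      div_mul_div_rpow_le_iff hq hpos.ne' hfin.ne, wMeas, wMeas,
      withDensity_apply _ (hS.measurableSet_cell _ _ _ _),
      withDensity_apply _ (hS.measurableSet_cell _ _ _ _)]
    rfl
  refine and_congr_right fun _ => ⟨fun h => ⟨_, h, fun x a l hl => ?_⟩, ?_⟩
  · have h1 := (key (AqPlusConst d μ p γ q ω) x (a + l ^ p) l hl).1
      (le_iSup_of_le x (le_iSup_of_le (a + l ^ p) (le_iSup_of_le l (le_iSup_of_le hl le_rfl))))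
    simpa only [add_sub_cancel_right] using h1
  · rintro ⟨C, hC, H⟩
    refine lt_of_le_of_lt ?_ hC
    exact iSup_le fun x => iSup_le fun t => iSup_le fun l => iSup_le fun hl =>
      (key C x t l hl).2 (H x (t - l ^ p) l hl)

/-- Hölder's inequality for a weight and its dual. -/
lemma IsWeight.measure_rpow_le {p q : ℝ} {ω : X × ℝ → ℝ≥0∞} (hω : IsWeight d μ p ω) (hq : 1 < q)
    {E : Set (X × ℝ)} (hE : MeasurableSet E) :
    (μ.prod volume) E ^ q ≤ wMeas μ ω E * wMeas μ (dualWeight q ω) E ^ (q - 1) := by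
  have hq0 : 0 < q := by linarith
  have hq1 : 0 < q - 1 := by linarith
  have hconj : q.HolderConjugate (conjExp q) := Real.HolderConjugate.conjExponent hq
  have hc : 0 < conjExp q := div_pos hq0 hq1
  have H := ENNReal.lintegral_mul_le_Lp_mul_Lq ((μ.prod volume).restrict E) hconj
    (f := fun z => ω z ^ (1 / q)) (g := fun z => ω z ^ (-(1 / q)))
    (hω.measurable.pow_const _).aemeasurable (hω.measurable.pow_const _).aemeasurable
  have h1 : ∫⁻ z in E, ((fun z => ω z ^ (1 / q)) * fun z => ω z ^ (-(1 / q))) z ∂μ.prod volume =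
      (μ.prod volume) E := by
    have : ∀ᵐ z ∂(μ.prod volume).restrict E,
        ((fun z => ω z ^ (1 / q)) * fun z => ω z ^ (-(1 / q))) z = 1 := by
      filter_upwards [ae_restrict_of_ae hω.ae_pos, ae_restrict_of_ae hω.ae_lt_top] with z hz1 hz2
      simp only [Pi.mul_apply]
      rw [← ENNReal.rpow_add _ _ hz1.ne' hz2.ne, add_neg_cancel, ENNReal.rpow_zero]
    rw [lintegral_congr_ae this, lintegral_one, Measure.restrict_apply_univ]
  have h2 : ∫⁻ z in E, (ω z ^ (1 / q)) ^ q ∂μ.prod volume = wMeas μ ω E := by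
    rw [wMeas, withDensity_apply _ hE]
    refine lintegral_congr fun z => ?_
    rw [← ENNReal.rpow_mul, one_div_mul_cancel hq0.ne', ENNReal.rpow_one]
  have h3 : ∫⁻ z in E, (ω z ^ (-(1 / q))) ^ conjExp q ∂μ.prod volume =
      wMeas μ (dualWeight q ω) E := by
    rw [wMeas, withDensity_apply _ hE]
    refine lintegral_congr fun z => ?_
    rw [← ENNReal.rpow_mul, dualWeight]
    congr 1
    unfold conjExp
    field_simp
    ring
  rw [h1, h2, h3] at H
  calc (μ.prod volume) E ^ q
      ≤ (wMeas μ ω E ^ (1 / q) * wMeas μ (dualWeight q ω) E ^ (1 / conjExp q)) ^ q := by gcongr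
    _ = _ := by
      rw [ENNReal.mul_rpow_of_nonneg _ _ hq0.le, ← ENNReal.rpow_mul, ← ENNReal.rpow_mul,
        one_div_mul_cancel hq0.ne', ENNReal.rpow_one]
      congr 2
      unfold conjExp
      field_simp

end Weights

/-! ### Change of the time lag -/

section Transport

variable {X : Type*} [MeasurableSpace X] {d : QuasiMetric X} {μ : Measure X}
  {p γ q : ℝ} {ω : X × ℝ → ℝ≥0∞} {C : ℝ≥0∞}

/-- One step of the transport: the mass of a cell is controlled by that of a neighbouring cell which
is later by about `(1 + γ) r^p`. The two cells being compared need not form a cylinder, but the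
second meets the upper part of the cylinder over the first in a set of comparable measure. -/
lemma AqBound.step (hC : AqBound d μ p γ q ω C) (hCt : C < ∞) (hS : IsSHT d μ)
    (hω : IsWeight d μ p ω) (hγ : γ < 1) (hq : 1 < q) :
    ∃ C₁ : ℝ≥0∞, 1 ≤ C₁ ∧ C₁ < ∞ ∧ ∀ (y y' : X) (r a τ : ℝ), 0 < r →
      d.dist y y' ≤ r / (2 * d.K0) → (1 + γ) * r ^ p ≤ τ →
      τ ≤ (1 + γ) * r ^ p + (1 - γ) * r ^ p / 2 →
      wMeas μ ω (cell d y r a ((1 - γ) * r ^ p)) ≤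
        C₁ * wMeas μ ω (cell d y' r (a + τ) ((1 - γ) * r ^ p)) := by
  obtain ⟨D, hD1, hD, H⟩ := hS.doubling_mul (4 * d.K0 ^ 2)
  have hK := d.K0_pos
  have hK1 := d.one_le_K0
  have hq0 : 0 < q := by linarith
  refine ⟨C * (2 * D) ^ q + 1, le_add_self, ?_, fun y y' r a τ hr hyy hτ1 hτ2 => ?_⟩
  · refine ENNReal.add_lt_top.2 ⟨ENNReal.mul_lt_top hCt ?_, ENNReal.one_lt_top⟩
    exact ENNReal.rpow_lt_top_of_nonneg hq0.le (ENNReal.mul_lt_top (by simp) hD).ne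
  set L := r ^ p with hL
  have hL0 : 0 < L := Real.rpow_pos_of_pos hr p
  have hh : 0 < (1 - γ) * L := mul_pos (by linarith) hL0
  set ρ := r / (2 * d.K0) with hρ
  have hρ0 : 0 < ρ := by positivity
  have hρr : 2 * d.K0 * ρ = r := by rw [hρ]; field_simp
  let E := cell d y' ρ (a + τ) ((1 - γ) * L / 2)
  have hEm : MeasurableSet E := hS.measurableSet_cell _ _ _ _
  have hE1 : E ⊆ cell d y r (a + (1 + γ) * L) ((1 - γ) * L) := by
    refine Set.prod_mono (d.ball_subset_ball (s := ρ) ?_ ?_) (Ioo_subset_Ioo ?_ ?_)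
    · rw [d.dist_symm]; exact hyy
    · linarith
    · linarith
    · linarith
  have hE2 : E ⊆ cell d y' r (a + τ) ((1 - γ) * L) := by
    refine Set.prod_mono (fun z hz => ?_) (Ioo_subset_Ioo le_rfl (by linarith))
    have hz : d.dist y' z < ρ := hz
    exact show d.dist y' z < r by nlinarith
  have hE0 : (μ.prod volume) E ≠ 0 := (prod_cell_pos hS y' hρ0 (by linarith)).ne'
  have hEt : (μ.prod volume) E ≠ ∞ := (prod_cell_lt_top hS y' hρ0).ne
  have hsize : μ (d.ball y r) * ENNReal.ofReal ((1 - γ) * L) ≤ 2 * D * (μ.prod volume) E := by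
    have h1 : μ (d.ball y r) ≤ D * μ (d.ball y' ρ) := by
      refine le_trans (measure_mono (d.ball_subset_ball hyy ?_)) (H y' ρ hρ0)
      have h2 : ρ ≤ r := by nlinarith
      calc d.K0 * (r + ρ) ≤ d.K0 * (2 * r) := by nlinarith
        _ = 4 * d.K0 ^ 2 * ρ := by rw [← hρr]; ring
    have h2 : ENNReal.ofReal ((1 - γ) * L) = 2 * ENNReal.ofReal ((1 - γ) * L / 2) := by
      rw [← ENNReal.ofReal_ofNat, ← ENNReal.ofReal_mul (by norm_num)]
      congr 1; ring
    rw [prod_cell, h2]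
    calc _ ≤ D * μ (d.ball y' ρ) * (2 * ENNReal.ofReal ((1 - γ) * L / 2)) := by gcongr
      _ = _ := by ring
  have hA := hC y a r hr
  have hmain : (μ.prod volume) E ^ q * wMeas μ ω (cell d y r a ((1 - γ) * L)) ≤
      (μ.prod volume) E ^ q * (C * (2 * D) ^ q * wMeas μ ω E) := by
    set σ := wMeas μ (dualWeight q ω)
    calc (μ.prod volume) E ^ q * wMeas μ ω (cell d y r a ((1 - γ) * L))
        ≤ (wMeas μ ω E * σ E ^ (q - 1)) * wMeas μ ω (cell d y r a ((1 - γ) * L)) := by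
          gcongr; exact hω.measure_rpow_le hq hEm
      _ ≤ (wMeas μ ω E * σ (cell d y r (a + (1 + γ) * L) ((1 - γ) * L)) ^ (q - 1)) *
            wMeas μ ω (cell d y r a ((1 - γ) * L)) := by
          gcongr
      _ = wMeas μ ω E * (wMeas μ ω (cell d y r a ((1 - γ) * L)) *
            σ (cell d y r (a + (1 + γ) * L) ((1 - γ) * L)) ^ (q - 1)) := by ring
      _ ≤ wMeas μ ω E * (C * (2 * D * (μ.prod volume) E) ^ q) := by
          refine mul_le_mul_right (hA.trans ?_) _
          gcongr
      _ = _ := by rw [ENNReal.mul_rpow_of_nonneg _ _ hq0.le]; ring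
  have hfin := (ENNReal.mul_le_mul_iff_right
    (by simp [hE0, hEt] : (μ.prod volume) E ^ q ≠ 0)
    (ENNReal.rpow_ne_top_of_nonneg hq0.le hEt)).1 hmain
  calc _ ≤ C * (2 * D) ^ q * wMeas μ ω E := hfin
    _ ≤ (C * (2 * D) ^ q + 1) * wMeas μ ω (cell d y' r (a + τ) ((1 - γ) * L)) := by
      gcongr
      exact le_self_add

/-- A radius ratio `ε` so small that crossing a ball of radius `l` in steps of size about `ε l`,
each costing time about `(ε l)^p`, takes at most time `γ' l^p`. This is where `p > 1` enters. -/
lemma exists_ratio {p γ' A B : ℝ} (hp : 1 < p) (hγ' : 0 < γ') (hA : 0 < A) (hB : 0 < B) :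
    ∃ ε : ℝ, 0 < ε ∧ ε ≤ 1 ∧ ε ^ p * (B + A / ε) ≤ γ' := by
  set δ := γ' / (B + A) with hδ
  have hδ0 : 0 < δ := by positivity
  have hp1 : 0 < p - 1 := by linarith
  refine ⟨min 1 (δ ^ (1 / (p - 1))), lt_min one_pos (Real.rpow_pos_of_pos hδ0 _), min_le_left _ _, ?_⟩
  set ε := min 1 (δ ^ (1 / (p - 1))) with hε
  have hε0 : 0 < ε := lt_min one_pos (Real.rpow_pos_of_pos hδ0 _)
  have hε1 : ε ≤ 1 := min_le_left _ _
  have h1 : ε ^ (p - 1) ≤ δ := by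
    calc ε ^ (p - 1) ≤ (δ ^ (1 / (p - 1))) ^ (p - 1) :=
          Real.rpow_le_rpow hε0.le (min_le_right _ _) hp1.le
      _ = δ := by rw [← Real.rpow_mul hδ0.le, one_div_mul_cancel hp1.ne', Real.rpow_one]
  have h2 : ε ^ p = ε ^ (p - 1) * ε := by
    conv_rhs => rw [← Real.rpow_one ε, ← Real.rpow_mul hε0.le, one_mul]
    rw [← Real.rpow_add hε0]; congr 1; ring
  calc ε ^ p * (B + A / ε) = ε ^ (p - 1) * (B * ε + A) := by rw [h2]; field_simp
    _ ≤ δ * (B + A) := by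
      gcongr
      nlinarith
    _ = γ' := by rw [hδ]; field_simp

/-- A sufficiently long time `T'` is divided into a large number of equal steps whose length is
admissible in `AqBound.step`. -/
lemma exists_steps {γ L T' B : ℝ} (hγ0 : 0 < γ) (hγ : γ < 1) (hL0 : 0 < L) (hB : 0 < B)
    (hT' : 2 * L * (2 + 4 / (1 - γ) + B) ≤ T') :
    ∃ (n : ℕ) (τ : ℝ), 1 + B ≤ n ∧ n * ((1 + γ) * L) ≤ T' ∧ n * τ = T' ∧ (1 + γ) * L ≤ τ ∧
      τ ≤ (1 + γ) * L + (1 - γ) * L / 2 := by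
  have h1γ : 0 < 1 - γ := by linarith
  have h4γ : 0 < 4 / (1 - γ) := by positivity
  have hκ0 : 0 < (1 + γ) * L := by positivity
  have hκ2 : (1 + γ) * L ≤ 2 * L := by nlinarith
  have hT'0 : 0 ≤ T' := le_trans (by positivity) hT'
  generalize hκ : (1 + γ) * L = κ at *
  set n := ⌊T' / κ⌋₊
  have hn_up : (n : ℝ) * κ ≤ T' := by
    rw [← le_div_iff₀ hκ0]; exact Nat.floor_le (by positivity)
  have hn_lt : T' < (n + 1) * κ := by
    rw [← div_lt_iff₀ hκ0]; exact Nat.lt_floor_add_one _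
  have hn_low : 1 + 4 / (1 - γ) + B ≤ n := by
    have h1 : 2 + 4 / (1 - γ) + B ≤ T' / κ := by
      rw [le_div_iff₀ hκ0]
      refine le_trans ?_ hT'
      calc (2 + 4 / (1 - γ) + B) * κ ≤ (2 + 4 / (1 - γ) + B) * (2 * L) := by gcongr
        _ = _ := by ring
    have h2 : T' / κ < n + 1 := Nat.lt_floor_add_one _
    linarith
  have hn0 : (0 : ℝ) < n := by linarith
  refine ⟨n, T' / n, by linarith, hn_up, mul_div_cancel₀ _ hn0.ne', ?_, ?_⟩
  · rw [le_div_iff₀ hn0]; linarith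
  · rw [div_le_iff₀ hn0]
    have h1 : 4 / (1 - γ) * ((1 - γ) * L / 2) = 2 * L := by field_simp; norm_num
    have h2 : 4 / (1 - γ) * ((1 - γ) * L / 2) ≤ n * ((1 - γ) * L / 2) := by
      gcongr
      linarith
    nlinarith

/-- The time lag of an `A_q^+` condition can be decreased to any positive value. -/
lemma AqBound.decrease (hC : AqBound d μ p γ q ω C) (hCt : C < ∞) (hS : IsSHT d μ)
    (hMG : d.MonotoneGeodesic) (hω : IsWeight d μ p ω) (hp : 1 < p) (hγ : γ < 1) (hq : 1 < q)
    {γ' : ℝ} (hγ' : 0 < γ') (hγγ : γ' < γ) : ∃ C' < ∞, AqBound d μ p γ' q ω C' := by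
  obtain ⟨C₁, hC₁, hC₁t, hstep⟩ := hC.step hCt hS hω hγ hq
  obtain ⟨K, hK1, hchain⟩ := d.exists_chain hMG
  have hK0 := d.K0_pos
  have hK01 := d.one_le_K0
  have hq0 : 0 < q := by linarith
  have h1γ : 0 < 1 - γ := by linarith
  have h1γ' : 0 < 1 - γ' := by linarith
  have hγ0 : 0 < γ := by linarith
  -- two points of a ball of radius `l` are joined by a chain of `1 + A / ε` steps of size
  -- `ε l / (2 K₀)`
  set A := 4 * d.K0 ^ 2 * K with hA
  have hA0 : 0 < A := by positivity
  obtain ⟨ε, hε, hε1, hεγ⟩ := exists_ratio (B := 2 * (3 + 4 / (1 - γ))) (A := 2 * A) hp hγ'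
    (by positivity) (by positivity)
  have hεp : 0 < ε ^ p := Real.rpow_pos_of_pos hε p
  have hεp1 : ε ^ p ≤ 1 := Real.rpow_le_one hε.le hε1 (by linarith)
  set η := (1 - γ) * ε ^ p with hη
  have hη0 : 0 < η := by positivity
  obtain ⟨N, hN⟩ := hS.exists_heavy_cell hε hε1 hη0
  obtain ⟨D, hD1, hD, H⟩ := hS.doubling_mul (2 * d.K0)
  set P := ⌊4 / ε ^ p⌋₊ with hP
  refine ⟨N * (N : ℝ≥0∞) ^ (q - 1) * (C₁ ^ P * (C * D ^ q)), ?_, fun x a₀ l hl => ?_⟩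
  · refine ENNReal.mul_lt_top (ENNReal.mul_lt_top (ENNReal.natCast_lt_top _) ?_)
      (ENNReal.mul_lt_top (ENNReal.pow_lt_top hC₁t) (ENNReal.mul_lt_top hCt ?_))
    · exact ENNReal.rpow_lt_top_of_nonneg (by linarith) (ENNReal.natCast_ne_top _)
    · exact ENNReal.rpow_lt_top_of_nonneg hq0.le hD.ne
  set T := l ^ p with hT
  have hT0 : 0 < T := Real.rpow_pos_of_pos hl p
  set r := ε * l with hr
  have hr0 : 0 < r := by positivity
  have hrl : r ≤ l := mul_le_of_le_one_left hl.le hε1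
  have hrp : r ^ p = ε ^ p * T := Real.mul_rpow hε.le hl.le
  set L := r ^ p with hL
  have hL0 : 0 < L := Real.rpow_pos_of_pos hr0 p
  have hηT : η * T = (1 - γ) * L := by rw [hη, hrp]; ring
  set σ := wMeas μ (dualWeight q ω)
  obtain ⟨y, hy, a, ha1, ha2, hW⟩ := hN (wMeas μ ω) x l a₀ T ((1 - γ') * T) hl hT0
    (mul_le_of_le_one_left hT0.le (by linarith))
  obtain ⟨y', hy', b, hb1, hb2, hσ⟩ := hN σ x l (a₀ + (1 + γ') * T) T ((1 - γ') * T) hl hT0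
    (mul_le_of_le_one_left hT0.le (by linarith))
  rw [hηT] at hW hσ ha1 hb1
  -- the time between the two heavy cells, except for the last `(1 + γ) L`, which is the lag of a
  -- single cylinder, is divided into equal steps
  set κ := (1 + γ) * L with hκ
  have hκ0 : 0 < κ := by positivity
  have hκ2 : κ ≤ 2 * L := by rw [hκ]; gcongr; linarith
  have hκL : L ≤ κ := by rw [hκ]; exact le_mul_of_one_le_left hL0.le (by linarith)
  set T' := b - a - κ with hT'
  have hLT : L * (2 * (3 + 4 / (1 - γ)) + 2 * A / ε) ≤ γ' * T := by
    rw [hrp]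
    calc ε ^ p * T * (2 * (3 + 4 / (1 - γ)) + 2 * A / ε)
        = (ε ^ p * (2 * (3 + 4 / (1 - γ)) + 2 * A / ε)) * T := by ring
      _ ≤ γ' * T := by gcongr
  have hT'low : 2 * L * (2 + 4 / (1 - γ) + A / ε) ≤ T' := by
    have h1 : γ' * T - 2 * L ≤ T' := by rw [hT', hκ]; linarith
    have h2 : L * (2 * (3 + 4 / (1 - γ)) + 2 * A / ε) =
      2 * L * (2 + 4 / (1 - γ) + A / ε) + 2 * L := by ring
    linarith
  have hLT1 : L ≤ T := by rw [hrp]; exact mul_le_of_le_one_left hT0.le hεp1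
  have hT'up : T' ≤ 4 * T := by
    have h1 : γ' * T ≤ 1 * T := by gcongr; linarith
    have h2 : (1 - γ) * L ≤ 1 * L := by gcongr; linarith
    linarith
  obtain ⟨n, τ, hn_low, hn_up, hnτ, hτ1, hτ2⟩ := exists_steps hγ0 hγ hL0 (B := A / ε)
    (by positivity) hT'low
  have hnP : n ≤ P := by
    refine Nat.le_floor ?_
    rw [le_div_iff₀ hεp]
    refine le_of_mul_le_mul_right ?_ hT0
    calc (n : ℝ) * ε ^ p * T = n * L := by rw [hrp]; ring
      _ ≤ n * κ := by gcongr
      _ ≤ T' := hn_up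
      _ ≤ 4 * T := hT'up
  obtain ⟨c, hc0, hcs, hcn⟩ := hchain (r / (2 * d.K0) / K) (by positivity) y y'
  have hcs' : ∀ i, d.dist (c i) (c (i + 1)) ≤ r / (2 * d.K0) := by
    intro i
    have h1 := hcs i
    rwa [mul_div_cancel₀ _ (by positivity : K ≠ 0)] at h1
  have hcn' : c n = y' := by
    refine hcn n ?_
    have h1 : d.dist y y' ≤ 2 * d.K0 * l := by
      have h2 := d.dist_triangle y y' x
      have hy : d.dist x y < l := hy
      have hy' : d.dist x y' < l := hy'
      rw [d.dist_symm y x] at h2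
      have h3 : d.K0 * (d.dist x y + d.dist x y') ≤ d.K0 * (l + l) := by gcongr
      linarith
    have h2 : d.dist y y' / (r / (2 * d.K0) / K) ≤ A / ε := by
      rw [div_le_div_iff₀ (by positivity) hε]
      have h3 : A * (r / (2 * d.K0) / K) = 2 * d.K0 * l * ε := by
        rw [hA, hr]; field_simp; norm_num
      rw [h3]
      gcongr
    linarith
  have htrans : ∀ k : ℕ, wMeas μ ω (cell d y r a ((1 - γ) * L)) ≤
      C₁ ^ k * wMeas μ ω (cell d (c k) r (a + k * τ) ((1 - γ) * L)) := by
    intro k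
    induction k with
    | zero => simp [hc0]
    | succ k ih =>
      have h1 := hstep (c k) (c (k + 1)) r (a + k * τ) τ hr0 (hcs' k) hτ1 hτ2
      calc _ ≤ _ := ih
        _ ≤ C₁ ^ k * (C₁ * wMeas μ ω (cell d (c (k + 1)) r (a + k * τ + τ) ((1 - γ) * L))) := by
          gcongr
        _ = _ := by
          rw [pow_succ, mul_assoc]
          congr 4
          push_cast; ring
  have hmass : μ (d.ball y' r) * ENNReal.ofReal ((1 - γ) * L) ≤
      D * (μ (d.ball x l) * ENNReal.ofReal ((1 - γ') * T)) := by
    have h1 : μ (d.ball y' r) ≤ D * μ (d.ball x l) := by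
      refine le_trans (measure_mono (d.ball_subset_ball (s := l) ?_ ?_)) (H x l hl)
      · rw [d.dist_symm]; exact (show d.dist x y' < l from hy').le
      · have : d.K0 * (r + l) ≤ d.K0 * (l + l) := by gcongr
        linarith
    rw [← mul_assoc]
    exact mul_le_mul' h1 (ENNReal.ofReal_le_ofReal
      (mul_le_mul (by linarith) hLT1 hL0.le h1γ'.le))
  have hpair : wMeas μ ω (cell d y r a ((1 - γ) * L)) * σ (cell d y' r b ((1 - γ) * L)) ^ (q - 1) ≤
      C₁ ^ P * (C * D ^ q) * (μ (d.ball x l) * ENNReal.ofReal ((1 - γ') * T)) ^ q := by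
    have h1 := htrans n
    have h2 := hC y' (a + n * τ) r hr0
    have h3 : a + n * τ + (1 + γ) * r ^ p = b := by rw [hnτ, hT', hκ]; ring
    rw [hcn'] at h1
    rw [h3] at h2
    calc _ ≤ C₁ ^ n * wMeas μ ω (cell d y' r (a + n * τ) ((1 - γ) * L)) *
          σ (cell d y' r b ((1 - γ) * L)) ^ (q - 1) := by gcongr
      _ ≤ C₁ ^ P * (C * (μ (d.ball y' r) * ENNReal.ofReal ((1 - γ) * L)) ^ q) := by
        rw [mul_assoc]
        exact mul_le_mul' (pow_le_pow_right₀ hC₁ hnP) h2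
      _ ≤ C₁ ^ P * (C * (D * (μ (d.ball x l) * ENNReal.ofReal ((1 - γ') * T))) ^ q) := by gcongr
      _ = _ := by rw [ENNReal.mul_rpow_of_nonneg _ _ hq0.le]; ring
  calc _ ≤ (N * wMeas μ ω (cell d y r a ((1 - γ) * L))) *
        (N * σ (cell d y' r b ((1 - γ) * L))) ^ (q - 1) := by gcongr
    _ = N * (N : ℝ≥0∞) ^ (q - 1) * (wMeas μ ω (cell d y r a ((1 - γ) * L)) *
        σ (cell d y' r b ((1 - γ) * L)) ^ (q - 1)) := by
      rw [ENNReal.mul_rpow_of_nonneg _ _ (by linarith : (0 : ℝ) ≤ q - 1)]; ring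
    _ ≤ N * (N : ℝ≥0∞) ^ (q - 1) * (C₁ ^ P * (C * D ^ q) *
        (μ (d.ball x l) * ENNReal.ofReal ((1 - γ') * T)) ^ q) := by gcongr
    _ = _ := by ring

/-- The time lag of an `A_q^+` condition can be increased: the parts of the cylinder shrink, and
their measures change by a fixed factor. -/
lemma AqBound.increase (hC : AqBound d μ p γ q ω C) (hCt : C < ∞) (hq : 1 < q) {γ' : ℝ}
    (hγγ : γ ≤ γ') (hγ' : γ' < 1) : ∃ C' < ∞, AqBound d μ p γ' q ω C' := by
  have hq0 : 0 < q := by linarith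
  set R := ENNReal.ofReal ((1 - γ) / (1 - γ')) with hR
  refine ⟨C * R ^ q, ENNReal.mul_lt_top hCt (ENNReal.rpow_lt_top_of_nonneg hq0.le (by simp [hR])),
    fun x a l hl => ?_⟩
  have hl0 : 0 < l ^ p := Real.rpow_pos_of_pos hl p
  have h1γ : 0 < 1 - γ' := by linarith
  have hsize : μ (d.ball x l) * ENNReal.ofReal ((1 - γ) * l ^ p) =
      R * (μ (d.ball x l) * ENNReal.ofReal ((1 - γ') * l ^ p)) := by
    have : (1 - γ) * l ^ p = (1 - γ) / (1 - γ') * ((1 - γ') * l ^ p) := by field_simp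
    rw [this, ENNReal.ofReal_mul (div_nonneg (by linarith) h1γ.le)]
    ring
  calc _ ≤ wMeas μ ω (cell d x l a ((1 - γ) * l ^ p)) *
        wMeas μ (dualWeight q ω) (cell d x l (a + (1 + γ) * l ^ p) ((1 - γ) * l ^ p)) ^ (q - 1) := by
        gcongr ?_ * ?_
        · exact measure_mono (cell_mono le_rfl (by nlinarith))
        · refine ENNReal.rpow_le_rpow (measure_mono (cell_mono (by nlinarith) ?_)) (by linarith)
          exact le_of_eq (by ring)
    _ ≤ C * (μ (d.ball x l) * ENNReal.ofReal ((1 - γ) * l ^ p)) ^ q := hC x a l hl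
    _ = _ := by rw [hsize, ENNReal.mul_rpow_of_nonneg _ _ hq0.le]; ring

end Transport

/-- Theorem 4.1 / Remark 4.5: the parabolic Muckenhoupt classes
`A_q^+(γ)` increase with the time lag, decrease in `(0,1)`, and are independent of the
choice of the time lag `γ ∈ (0,1)`. -/
theorem statement0 {X : Type*} [MeasurableSpace X] (d : QuasiMetric X) (μ : Measure X)
    (hSHT : IsSHT d μ) (hMG : d.MonotoneGeodesic) (p : ℝ) (hp : 1 < p)
    (q : ℝ) (hq : 1 < q) :
    (∀ γ γ' : ℝ, 0 ≤ γ → γ ≤ γ' → γ' < 1 → AqPlus d μ p γ q ⊆ AqPlus d μ p γ' q) ∧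
    (∀ γ γ' : ℝ, 0 < γ' → γ' < γ → γ < 1 → AqPlus d μ p γ q ⊆ AqPlus d μ p γ' q) ∧
    (∀ γ γ' : ℝ, 0 < γ → γ < 1 → 0 < γ' → γ' < 1 →
      AqPlus d μ p γ q = AqPlus d μ p γ' q) := by
  have h1 : ∀ γ γ' : ℝ, 0 ≤ γ → γ ≤ γ' → γ' < 1 → AqPlus d μ p γ q ⊆ AqPlus d μ p γ' q := by
    intro γ γ' _ hγγ hγ' ω hω
    obtain ⟨hw, C, hCt, hC⟩ := (mem_AqPlus_iff hSHT (by linarith) hq).1 hω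
    exact (mem_AqPlus_iff hSHT hγ' hq).2 ⟨hw, hC.increase hCt hq hγγ hγ'⟩
  have h2 : ∀ γ γ' : ℝ, 0 < γ' → γ' < γ → γ < 1 → AqPlus d μ p γ q ⊆ AqPlus d μ p γ' q := by
    intro γ γ' hγ' hγγ hγ ω hω
    obtain ⟨hw, C, hCt, hC⟩ := (mem_AqPlus_iff hSHT hγ hq).1 hω
    exact (mem_AqPlus_iff hSHT (by linarith) hq).2
      ⟨hw, hC.decrease hCt hSHT hMG hw hp hγ hq hγ' hγγ⟩
  have h3 : ∀ γ γ' : ℝ, 0 < γ → γ < 1 → 0 < γ' → γ' < 1 →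
      AqPlus d μ p γ q ⊆ AqPlus d μ p γ' q := by
    intro γ γ' hγ0 hγ hγ'0 hγ'
    rcases le_or_gt γ γ' with h | h
    · exact h1 γ γ' hγ0.le h hγ'
    · exact h2 γ γ' hγ'0 h hγ
  exact ⟨h1, h2, fun γ γ' hγ0 hγ hγ'0 hγ' =>
    (h3 γ γ' hγ0 hγ hγ'0 hγ').antisymm (h3 γ' γ hγ'0 hγ' hγ0 hγ)⟩
end

section
/- Let (X,ρ,μ) be a space of homogeneous type with the monotone geodesic property, fix p ∈ (1,∞), let q ∈ (1,∞) and γ ∈ [0,1). If ω is a weight such that the parabolic maximal operator 𝓜^{γ+} is bounded from L^q(X×ℝ,ω) to L^{q,∞}(X×ℝ,ω), then ω ∈ A_q^+(γ). -/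
/-!
The supremum defining `𝓜^{γ+} f(z)` runs over all rectangles `P` containing `z`, including those
with `z` in the upper part `P^+(γ)` itself. Given a cylinder `R` over `B(x,l)`, choose a dyadic cube
`Q ⊇ B(x,l)` of scale `δ^k` between `L l` and `A l`, where `L` is so large that the strip of
duration `(1-γ) δ^{kp}` is at least as long as `R`. Placing the rectangle `P` over `Q` so that `P^+(γ)`
starts at the bottom of `R` gives `R ⊆ P^+(γ)`, while doubling gives `λ(P^+(γ)) ≤ B λ(R^+(γ))`
with `B` independent of `R` (`exists_big_cube`). The comparability of `δ^k` with `l` rests on the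
monotone geodesic property, which produces points in annuli (`exists_annulus_point`).

For `f` supported in `R^+(γ)`, `𝓜^{γ+} f` is then at least `(∫ f) / λ(P^+(γ))` throughout
`R^-(γ)`, and testing the weak-type inequality on truncations of `ω^{1-q'}` yields
`ω(R^-(γ)) (∫_{R^+(γ)} ω^{1-q'})^{q-1} ≤ C (2 λ(P^+(γ)))^q` (`test_bound`), which is the
`A_q^+(γ)` condition after division by `λ(R^+(γ))^q`.
-/

open MeasureTheory Set Filter
open scoped ENNReal NNReal

/-! ### Test functions in the weak-type inequality -/

/-- The exponent identity `(1 - q') (q - 1) = -1`. -/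
lemma conjExp_mul {q : ℝ} (hq : 1 < q) : (1 - conjExp q) * (q - 1) = -1 := by
  unfold conjExp
  have : q - 1 ≠ 0 := by linarith
  field_simp
  ring

lemma one_sub_conjExp_neg {q : ℝ} (hq : 1 < q) : 1 - conjExp q < 0 := by
  have h := conjExp_mul hq
  by_contra! h'
  nlinarith

/-- Any truncation `m` of `w^{1-q'}` satisfies `m^q w ≤ m`. -/
lemma trunc_rpow_mul_le {q : ℝ} (hq : 1 < q) {w m : ℝ≥0∞} (h0 : 0 < w) (ht : w < ∞)
    (hm : m ≤ w ^ (1 - conjExp q)) : m ^ q * w ≤ m := by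
  have h1 : m ^ q = m * m ^ (q - 1) := by
    conv_lhs => rw [show q = 1 + (q - 1) by ring]
    rw [ENNReal.rpow_add_of_nonneg _ _ zero_le_one (by linarith), ENNReal.rpow_one]
  have h2 : m ^ (q - 1) ≤ w⁻¹ := by
    calc m ^ (q - 1) ≤ (w ^ (1 - conjExp q)) ^ (q - 1) :=
          ENNReal.rpow_le_rpow hm (by linarith)
      _ = w⁻¹ := by rw [← ENNReal.rpow_mul, conjExp_mul hq, ENNReal.rpow_neg_one]
  calc m ^ q * w = m * m ^ (q - 1) * w := by rw [h1]
    _ ≤ m * w⁻¹ * w := by gcongr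
    _ = m := by rw [mul_assoc, ENNReal.inv_mul_cancel h0.ne' ht.ne, mul_one]

/-- Cancellation step: the weak-type inequality at level `S / (2Λ)` for a function `f` with
`∫ f^q ω ≤ S = ∫ f`. -/
lemma weak_level {q : ℝ} {W C Λ S : ℝ≥0∞} (hΛ0 : Λ ≠ 0) (hΛ : Λ ≠ ∞)
    (hS0 : S ≠ 0) (hS : S ≠ ∞) (h : W ≤ C * (S / (2 * Λ)) ^ (-q) * S) :
    W * S ^ (q - 1) ≤ C * (2 * Λ) ^ q := by
  have h2 : (2 * Λ) ≠ 0 := by simp [hΛ0]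
  have h2' : (2 * Λ) ≠ ∞ := ENNReal.mul_ne_top (by simp) hΛ
  have e1 : (S / (2 * Λ)) ^ (-q) = (2 * Λ) ^ q * S ^ (-q) := by
    rw [div_eq_mul_inv, ENNReal.mul_rpow_of_ne_top hS (ENNReal.inv_ne_top.2 h2),
      ENNReal.inv_rpow, ENNReal.rpow_neg (2 * Λ), inv_inv, mul_comm]
  have e2 : S ^ (-q) * S * S ^ (q - 1) = 1 := by
    nth_rewrite 2 [← ENNReal.rpow_one S]
    rw [← ENNReal.rpow_add _ _ hS0 hS, ← ENNReal.rpow_add _ _ hS0 hS]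
    have : -q + 1 + (q - 1) = 0 := by ring
    rw [this, ENNReal.rpow_zero]
  calc W * S ^ (q - 1) ≤ C * (S / (2 * Λ)) ^ (-q) * S * S ^ (q - 1) := by gcongr
    _ = C * (2 * Λ) ^ q * (S ^ (-q) * S * S ^ (q - 1)) := by rw [e1]; ring
    _ = C * (2 * Λ) ^ q := by rw [e2, mul_one]

/-- A weak-type inequality, valid for all `f` at all levels below `(∫_E f) / Λ`, bounds
`W (∫_E ω^{1-q'})^{q-1}`. It is applied to `f = 1_E min(n, ω^{1-q'})`; the truncation makes
`∫ f` finite, as is needed for the cancellation, and is removed by monotone convergence. -/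
lemma test_bound {α : Type*} [MeasurableSpace α] (ν : Measure α) {ω : α → ℝ≥0∞}
    (hω : Measurable ω) (hpos : ∀ᵐ z ∂ν, 0 < ω z) (hlt : ∀ᵐ z ∂ν, ω z < ∞)
    {q : ℝ} (hq : 1 < q) {E : Set α} (hE : MeasurableSet E) (hE0 : ν E ≠ 0) (hEt : ν E ≠ ∞)
    {W C Λ : ℝ≥0∞} (hΛ0 : Λ ≠ 0) (hΛ : Λ ≠ ∞)
    (h : ∀ f : α → ℝ≥0∞, Measurable f → ∫⁻ z, f z ^ q * ω z ∂ν < ∞ →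
      ∀ ξ : ℝ≥0∞, 0 < ξ → ξ < ∞ → ξ < (∫⁻ z in E, f z ∂ν) / Λ →
        W ≤ C * ξ ^ (-q) * ∫⁻ z, f z ^ q * ω z ∂ν) :
    W * (∫⁻ z in E, ω z ^ (1 - conjExp q) ∂ν) ^ (q - 1) ≤ C * (2 * Λ) ^ q := by
  set a := 1 - conjExp q with ha
  let g : ℕ → α → ℝ≥0∞ := fun n z => min ((n : ℝ≥0∞) + 1) (ω z ^ a)
  have hg : ∀ n, Measurable (g n) := fun n => measurable_const.min (hω.pow_const a)
  have hgmono : Monotone g := fun m n hmn z => by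
    have : (m : ℝ≥0∞) + 1 ≤ n + 1 := by gcongr
    exact min_le_min_right _ this
  have hgsup : ∀ z, ⨆ n, g n z = ω z ^ a := fun z => by
    apply le_antisymm (iSup_le fun n => min_le_right _ _)
    refine le_of_forall_lt fun c hc => ?_
    obtain ⟨n, hn⟩ := ENNReal.exists_nat_gt hc.ne_top
    refine lt_of_lt_of_le (lt_min (hn.trans_le le_self_add) hc) (le_iSup (fun n => g n z) n)
  let S : ℕ → ℝ≥0∞ := fun n => ∫⁻ z in E, g n z ∂ν
  have hSt : ∀ n, S n ≠ ∞ := fun n => by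
    have : S n ≤ ((n : ℝ≥0∞) + 1) * ν E := by
      calc S n ≤ ∫⁻ _ in E, ((n : ℝ≥0∞) + 1) ∂ν := lintegral_mono fun z => min_le_left _ _
        _ = _ := setLIntegral_const _ _
    exact ne_top_of_le_ne_top (ENNReal.mul_ne_top (by simp) hEt) this
  have hS0 : ∀ n, S n ≠ 0 := fun n h0 => by
    rw [lintegral_eq_zero_iff (hg n)] at h0
    have h1 := ae_restrict_of_ae (s := E) hlt
    have h2 := ae_restrict_of_ae (s := E) hpos
    have : ∀ᵐ z ∂ν.restrict E, False := by
      filter_upwards [h0, h1, h2] with z hz hz1 hz2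
      have h3 : 0 < g n z :=
        lt_min (by positivity) (ENNReal.rpow_pos hz2 hz1.ne)
      exact h3.ne' hz
    rw [ae_iff] at this
    simp at this
    exact hE0 this
  have hkey : ∀ n, W * S n ^ (q - 1) ≤ C * (2 * Λ) ^ q := fun n => by
    have hf : Measurable (E.indicator (g n)) := (hg n).indicator hE
    have hint : ∫⁻ z, (E.indicator (g n) z) ^ q * ω z ∂ν ≤ S n := by
      change _ ≤ ∫⁻ z in E, g n z ∂ν
      rw [← lintegral_indicator hE]
      apply lintegral_mono_ae
      filter_upwards [hpos, hlt] with z h0 ht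
      by_cases hz : z ∈ E
      · simp only [hz, indicator_of_mem]
        exact trunc_rpow_mul_le hq h0 ht (min_le_right _ _)
      · simp [hz, show 0 < q by linarith]
    have hE' : ∫⁻ z in E, E.indicator (g n) z ∂ν = S n := by
      apply setLIntegral_congr_fun hE
      intro z hz
      simp [hz]
    have h2 : (2 * Λ) ≠ 0 := by simp [hΛ0]
    have h2' : (2 * Λ) ≠ ∞ := ENNReal.mul_ne_top (by simp) hΛ
    have hξ : S n / (2 * Λ) < S n / Λ := by
      apply ENNReal.div_lt_div_left (hS0 n) (hSt n)
      rw [two_mul]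
      exact ENNReal.lt_add_right hΛ hΛ0
    have := h _ hf (hint.trans_lt (hSt n).lt_top) (S n / (2 * Λ))
      (ENNReal.div_pos (hS0 n) h2') (ENNReal.div_lt_top (hSt n) h2) (by rw [hE']; exact hξ)
    exact weak_level hΛ0 hΛ (hS0 n) (hSt n) (this.trans (by gcongr))
  have hSsup : ∫⁻ z in E, ω z ^ a ∂ν = ⨆ n, S n := by
    rw [← lintegral_iSup hg hgmono]
    simp only [hgsup]
  have hpow : (⨆ n, S n) ^ (q - 1) = ⨆ n, S n ^ (q - 1) :=
    (ENNReal.orderIsoRpow (q - 1) (by linarith)).map_iSup S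
  rw [hSsup, hpow, ENNReal.mul_iSup]
  exact iSup_le hkey

/-! ### Geometry: cubes comparable to balls -/

/-- Annuli are nonempty: the last step of a monotone geodesic chain ending at `z` starts at a
point whose distance to `z` lies between `s` and `K̃ s`. -/
lemma exists_annulus_point {X : Type*} {d : QuasiMetric X} (hMG : d.MonotoneGeodesic)
    (hdiam : ∀ r : ℝ, ∃ x y : X, r < d.dist x y) :
    ∃ c : ℝ, 0 < c ∧ ∀ (z : X) (r : ℝ), 0 < r → ∃ y ∈ d.ball z r, c * r ≤ d.dist z y := by
  obtain ⟨Kt, hKt, H⟩ := hMG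
  refine ⟨1 / (2 * Kt), by positivity, fun z r hr => ?_⟩
  set s := r / (2 * Kt) with hs
  have hs0 : 0 < s := by positivity
  have hK := d.one_le_K0
  obtain ⟨y, hy⟩ : ∃ y, s ≤ d.dist y z := by
    by_contra! hcon
    obtain ⟨a, b, hab⟩ := hdiam (d.K0 * (s + s))
    have h1 := d.dist_triangle a b z
    have h2 := hcon a
    have h3 := hcon b
    rw [d.dist_symm] at h3
    have : d.K0 * (d.dist a z + d.dist z b) ≤ d.K0 * (s + s) := by gcongr
    linarith
  obtain ⟨m, hm, c, -, hcm, hc⟩ := H s hs0 y z hy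
  obtain ⟨h1, h2⟩ := hc (m - 1) (by omega)
  rw [show m - 1 + 1 = m by omega, hcm] at h1 h2
  have h0 := d.dist_nonneg z z
  refine ⟨c (m - 1), ?_, ?_⟩
  · change d.dist z _ < r
    rw [d.dist_symm]
    have : Kt * s = r / 2 := by rw [hs]; field_simp
    linarith
  · rw [d.dist_symm z]
    have : 1 / (2 * Kt) * r = s := by rw [hs]; ring
    linarith

lemma measure_ball_two_pow {X : Type*} [MeasurableSpace X] {d : QuasiMetric X}
    {μ : Measure X} {Cμ : ℝ≥0∞}
    (H : ∀ x r, 0 < r → μ (d.ball x (2 * r)) ≤ Cμ * μ (d.ball x r)) (x : X) {l : ℝ}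
    (hl : 0 < l) (n : ℕ) : μ (d.ball x (2 ^ n * l)) ≤ Cμ ^ n * μ (d.ball x l) := by
  induction n with
  | zero => simp
  | succ n ih =>
    calc μ (d.ball x (2 ^ (n + 1) * l)) = μ (d.ball x (2 * (2 ^ n * l))) := by
          congr 2; ring
      _ ≤ Cμ * μ (d.ball x (2 ^ n * l)) := H _ _ (by positivity)
      _ ≤ Cμ * (Cμ ^ n * μ (d.ball x l)) := by gcongr
      _ = _ := by ring

/-- Every ball `B(x,l)` lies in a dyadic cube of comparable measure and of scale `δ^k` between
`L l` and `A l`, where `L` is prescribed. -/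
lemma exists_big_cube {X : Type*} [MeasurableSpace X] {d : QuasiMetric X} {μ : Measure X}
    (hSHT : IsSHT d μ) (hMG : d.MonotoneGeodesic) (D : DyadicSystem X d)
    {L : ℝ} (hL : 0 < L) :
    ∃ A : ℝ, 0 < A ∧ ∃ M : ℝ≥0∞, M ≠ ∞ ∧ ∀ (x : X) (l : ℝ), 0 < l →
      ∃ τ k Q, Q ∈ D.cubes τ k ∧ d.ball x l ⊆ Q ∧ L * l ≤ D.δ ^ k ∧ D.δ ^ k ≤ A * l ∧
        μ Q ≤ M * μ (d.ball x l) := by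
  obtain ⟨c, hc, Hc⟩ := exists_annulus_point hMG hSHT.diam_infinite
  obtain ⟨Cμ, -, hCt, Hdoub⟩ := hSHT.doubling
  have hK : 0 < d.K0 := lt_of_lt_of_le one_pos d.one_le_K0
  have hc1 := D.c₁_pos
  have hC1 := D.C₁_pos
  have hcov := D.covC_pos
  -- A ball of radius `N l` is wide enough to force the scale of any cube containing it above `L l`.
  set N : ℝ := 1 + 2 * d.K0 * D.C₁ * L / c with hN
  have hN0 : 0 < N := by positivity
  have hN1 : 1 ≤ N := by
    have : 0 ≤ 2 * d.K0 * D.C₁ * L / c := by positivity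
    linarith
  have hNc : 2 * d.K0 * D.C₁ * L ≤ c * N := by
    have : c * N = c + 2 * d.K0 * D.C₁ * L := by rw [hN]; field_simp
    linarith
  obtain ⟨n, hn⟩ := pow_unbounded_of_one_lt (D.covC * N) (one_lt_two (α := ℝ))
  refine ⟨D.covC * N / (c * D.c₁), by positivity, Cμ ^ n, ENNReal.pow_ne_top hCt.ne,
    fun x l hl => ?_⟩
  obtain ⟨τ, k, Q, hQ, hBQ, hdiam⟩ := D.ball_subset_cube x (N * l) (by positivity)
  have hδ : 0 < D.δ ^ k := zpow_pos D.δ_pos k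
  have self_mem : ∀ (y : X) (r : ℝ), 0 < r → y ∈ d.ball y r := fun y r hr => by
    change d.dist y y < r
    rwa [(d.dist_eq_zero_iff y y).2 rfl]
  obtain ⟨z, hz1, hz2⟩ := D.sandwich τ k Q hQ
  have hxQ : x ∈ Q := hBQ (self_mem x _ (by positivity))
  refine ⟨τ, k, Q, hQ, fun y hy => hBQ ?_, ?_, ?_, ?_⟩
  · change d.dist x y < N * l
    have hy' : d.dist x y < l := hy
    nlinarith
  · obtain ⟨y, hyB, hy⟩ := Hc x (N * l) (by positivity)
    have h1 : d.dist z x < D.C₁ * D.δ ^ k := hz2 hxQ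
    have h2 : d.dist z y < D.C₁ * D.δ ^ k := hz2 (hBQ hyB)
    have h3 := d.dist_triangle x y z
    rw [d.dist_symm x z] at h3
    have h4 : d.K0 * (d.dist z x + d.dist z y) ≤ d.K0 * (D.C₁ * D.δ ^ k + D.C₁ * D.δ ^ k) := by
      gcongr
    have h5 : (2 * d.K0 * D.C₁) * (L * l) ≤ (2 * d.K0 * D.C₁) * D.δ ^ k := by
      calc (2 * d.K0 * D.C₁) * (L * l) = (2 * d.K0 * D.C₁ * L) * l := by ring
        _ ≤ (c * N) * l := by gcongr
        _ ≤ _ := by linarith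
    exact le_of_mul_le_mul_left h5 (by positivity)
  · obtain ⟨y, hyB, hy⟩ := Hc z (D.c₁ * D.δ ^ k) (by positivity)
    have h1 := hdiam z (hz1 (self_mem z _ (by positivity))) y (hz1 hyB)
    rw [div_mul_eq_mul_div, le_div_iff₀ (by positivity)]
    linarith
  · refine le_trans (measure_mono fun y hy => ?_) (measure_ball_two_pow Hdoub x hl n)
    change d.dist x y < 2 ^ n * l
    have := hdiam x hxQ y hy
    nlinarith

/-! ### The Muckenhoupt condition -/

/-- Theorem 5.6: if the parabolic maximal operator `𝓜^{γ+}` is bounded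
from `L^q(X×ℝ,ω)` to `L^{q,∞}(X×ℝ,ω)`, then `ω ∈ A_q^+(γ)`. -/
theorem statement4 {X : Type*} [MeasurableSpace X] (d : QuasiMetric X) (μ : Measure X)
    (hSHT : IsSHT d μ) (hMG : d.MonotoneGeodesic) (D : DyadicSystem X d)
    (p : ℝ) (hp : 1 < p) (q : ℝ) (hq : 1 < q) (γ : ℝ) (hγ0 : 0 ≤ γ) (hγ1 : γ < 1)
    (ω : X × ℝ → ℝ≥0∞) (hω : IsWeight d μ p ω)
    (hbdd : WeakBdd (μ.prod volume) (maxRectPlus D μ p γ) q ω) :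
    ω ∈ AqPlus d μ p γ q := by
  obtain ⟨C, -, hC, hweak⟩ := hbdd
  have hp0 : 0 < p := by linarith
  have hγ : 0 < 1 - γ := by linarith
  -- With `δ^k ≥ L l` the strip `P^+(γ)`, of duration `(1-γ) δ^{kp}`, is at least as long as `R`.
  set L : ℝ := 2 / (1 - γ) with hLdef
  have hL : 0 < L := by positivity
  have hL1 : 1 ≤ L := by rw [hLdef, le_div_iff₀ hγ]; linarith
  obtain ⟨A, hA, M, hM, Hcube⟩ := exists_big_cube hSHT hMG D hL
  set B : ℝ≥0∞ := M * ENNReal.ofReal (A ^ p) with hB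
  have hBt : B ≠ ∞ := ENNReal.mul_ne_top hM ENNReal.ofReal_ne_top
  have hfin : C * (2 * B) ^ q < ∞ :=
    ENNReal.mul_lt_top hC (ENNReal.rpow_lt_top_of_nonneg (by linarith)
      (ENNReal.mul_ne_top (by simp) hBt))
  refine ⟨hω, lt_of_le_of_lt ?_ hfin⟩
  refine iSup_le fun x => iSup_le fun t => iSup_le fun l => iSup_le fun hl => ?_
  obtain ⟨τ, k, Q, hQ, hBQ, hLl, hAl, hμQ⟩ := Hcube x l hl
  set h : ℝ := (D.δ ^ k) ^ p with hh
  have hδ : 0 < D.δ ^ k := zpow_pos D.δ_pos k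
  have hh0 : 0 < h := Real.rpow_pos_of_pos hδ p
  have hlp : 0 < l ^ p := Real.rpow_pos_of_pos hl p
  have hhL : 2 * l ^ p ≤ (1 - γ) * h := by
    have h1 : L * l ^ p ≤ h := by
      calc L * l ^ p ≤ L ^ p * l ^ p := by
            gcongr
            exact Real.self_le_rpow_of_one_le hL1 hp.le
        _ = (L * l) ^ p := (Real.mul_rpow hL.le hl.le).symm
        _ ≤ h := Real.rpow_le_rpow (by positivity) hLl hp0.le
    calc 2 * l ^ p = (1 - γ) * (L * l ^ p) := by rw [hLdef]; field_simp
      _ ≤ (1 - γ) * h := by gcongr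
  have hhA : h ≤ A ^ p * l ^ p := by
    rw [← Real.mul_rpow hA.le hl.le]
    exact Real.rpow_le_rpow hδ.le hAl hp0.le
  -- `P^+(γ)` starts at the bottom of `R`, so that all of `R` lies in `P^+(γ)`.
  set tP : ℝ := t - l ^ p - γ * h with htP
  set ν := μ.prod (volume : Measure ℝ) with hν
  set Rm := cylMinus d p x t l γ with hRm
  set Rp := cylPlus d p x t l γ with hRp
  set P := rectPlus D p Q k tP γ with hP
  have hγl : 0 ≤ γ * l ^ p := by positivity
  have hγl' : γ * l ^ p < l ^ p := by nlinarith
  have hγh : 0 ≤ γ * h := by positivity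
  have hRpP : Rp ⊆ P := by
    rintro ⟨y, s⟩ ⟨hy, hs1, hs2⟩
    refine ⟨hBQ hy, ?_, ?_⟩ <;> dsimp only at * <;> linarith
  have hRmP : Rm ⊆ rect D p Q k tP := by
    rintro ⟨y, s⟩ ⟨hy, hs1, hs2⟩
    refine ⟨hBQ hy, ?_, ?_⟩ <;> dsimp only at * <;> linarith
  have hb0 := hSHT.ball_pos x l hl
  have hbt := hSHT.ball_lt_top x l hl
  have hνRm : ν Rm = μ (d.ball x l) * ENNReal.ofReal ((1 - γ) * l ^ p) := by
    rw [hν, hRm, cylMinus, Measure.prod_prod, Real.volume_Ioo]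
    congr 2; ring
  have hνRp : ν Rp = μ (d.ball x l) * ENNReal.ofReal ((1 - γ) * l ^ p) := by
    rw [hν, hRp, cylPlus, Measure.prod_prod, Real.volume_Ioo]
    congr 2; ring
  have hνP : ν P = μ Q * ENNReal.ofReal ((1 - γ) * h) := by
    rw [hν, hP, rectPlus, Measure.prod_prod, Real.volume_Ioo]
    congr 2; ring
  set V := ν Rp with hV
  have hV0 : V ≠ 0 := by
    rw [hνRp]
    exact mul_ne_zero hb0.ne' (by rw [Ne, ENNReal.ofReal_eq_zero, not_le]; positivity)
  have hVt : V ≠ ∞ := by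
    rw [hνRp]
    exact ENNReal.mul_ne_top hbt.ne ENNReal.ofReal_ne_top
  have hPV : ν P ≤ B * V := by
    rw [hνP, hνRp, hB]
    calc μ Q * ENNReal.ofReal ((1 - γ) * h)
        ≤ (M * μ (d.ball x l)) * ENNReal.ofReal (A ^ p * ((1 - γ) * l ^ p)) := by
          refine mul_le_mul' hμQ (ENNReal.ofReal_le_ofReal ?_)
          nlinarith
      _ = _ := by rw [ENNReal.ofReal_mul (by positivity)]; ring
  have hP0 : ν P ≠ 0 := fun h0 => hV0 (measure_mono_null hRpP h0)
  have hPt : ν P ≠ ∞ := ne_top_of_le_ne_top (ENNReal.mul_ne_top hBt hVt) hPV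
  have hRpm : MeasurableSet Rp := (hSHT.measurableSet_ball x l).prod measurableSet_Ioo
  have hmain := test_bound ν hω.measurable hω.ae_pos hω.ae_lt_top hq hRpm hV0 hVt
    (W := ∫⁻ z in Rm, ω z ∂ν) (C := C) hP0 hPt (by
      intro f hf hfint ξ hξ0 hξt hξ
      refine le_trans (lintegral_mono_set fun z hz => ?_) (hweak f hf hfint ξ hξ0 hξt)
      refine lt_of_lt_of_le hξ ?_
      calc (∫⁻ z in Rp, f z ∂ν) / ν P ≤ lavg ν P f :=
            ENNReal.div_le_div_right (lintegral_mono_set hRpP) _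
        _ ≤ maxRectPlus D μ p γ f z :=
            le_iSup_of_le τ <| le_iSup_of_le k <| le_iSup_of_le Q <| le_iSup_of_le hQ <|
              le_iSup_of_le tP <| le_iSup_of_le (hRmP hz) le_rfl)
  have hVm : ν Rm = V := hνRm.trans hνRp.symm
  have hVq : V * V ^ (q - 1) = V ^ q := by
    nth_rewrite 1 [← ENNReal.rpow_one V]
    rw [← ENNReal.rpow_add _ _ hV0 hVt]
    congr 1; ring
  unfold lavg
  rw [hVm, ← hV]
  set S := ∫⁻ z in Rp, ω z ^ (1 - conjExp q) ∂ν with hS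
  set W := ∫⁻ z in Rm, ω z ∂ν with hW
  have hVq0 : V ^ q ≠ 0 := (ENNReal.rpow_pos hV0.bot_lt hVt).ne'
  have hVqt : V ^ q ≠ ∞ := ENNReal.rpow_ne_top_of_nonneg (by linarith) hVt
  calc W / V * (S / V) ^ (q - 1) = W * S ^ (q - 1) / (V * V ^ (q - 1)) := by
        rw [ENNReal.div_rpow_of_nonneg _ _ (by linarith), div_eq_mul_inv, div_eq_mul_inv,
          div_eq_mul_inv, ENNReal.mul_inv (Or.inl hV0) (Or.inl hVt)]
        ring
    _ = W * S ^ (q - 1) / V ^ q := by rw [hVq]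
    _ ≤ C * (2 * (B * V)) ^ q / V ^ q := by
        exact ENNReal.div_le_div_right (hmain.trans (by gcongr)) _
    _ = C * (2 * B) ^ q := by
        rw [← mul_assoc, ENNReal.mul_rpow_of_nonneg _ _ (by linarith), ← mul_assoc,
          ENNReal.mul_div_cancel_right hVq0 hVqt]
end

section
/- Let (X,ρ,μ) be a space of homogeneous type, fix p ∈ (1,∞), let q ∈ (1,∞), and let ω be a weight. Then the following are equivalent: (i) there exist positive constants κ and C such that for every parabolic rectangle P, (⨍_{P^−} ω^{κ+1})^{1/(κ+1)} ≤ C ⨍_{P^+} ω; (ii) there exist positive constants ε and C̃ such that for every parabolic rectangle P and every measurable set E ⊂ P^−, ω(E) ≤ C̃ (λ(E)/λ(P^−))^ε ω(P^+). -/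
/-!
Both implications are statements about one rectangle at a time. The halves `P⁻` and `P⁺` have the
same finite positive `λ`-measure `a`, so that `⨍_{P⁺} ω = ω(P⁺) / a`.

From the reverse Hölder inequality to absolute continuity: Hölder's inequality on `E ⊆ P⁻` gives
`ω(E) ≤ (∫_{P⁻} ω^{κ+1})^{1/(κ+1)} λ(E)^{κ/(κ+1)}`, and the first factor is controlled by the
reverse Hölder inequality; the exponent obtained is `ε = κ/(κ+1)`.

Conversely, put `A = C ⨍_{P⁺} ω`, so that the absolute-continuity condition reads
`ω(E) ≤ a A (λ(E)/a)^ε`. For the level set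
`E_n = P⁻ ∩ {ω ≥ 2^n A}` with relative measure `x`, Chebyshev's inequality gives `2^n x ≤ x^ε ≤ 1`,
hence `x ≤ 2^{-n}` and `ω(E_n) ≤ a A 2^{-nε}`. With `κ = ε/2`, summing
`ω^{κ+1} ≤ (2^{n+1} A)^κ ω` over the dyadic layers gives a convergent geometric series and
`∫_{P⁻} ω^{κ+1} ≤ K a A^{κ+1}`.
-/

open MeasureTheory Set Filter
open scoped ENNReal NNReal

/-- The constant `1 + 2^κ ∑ₙ 2^{-nκ}` produced by summing over dyadic level sets. -/
noncomputable def layerConst (κ : ℝ) : ℝ≥0∞ :=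
  1 + 2 ^ κ * (1 - 2 ^ (-κ))⁻¹

lemma layerConst_lt_top {κ : ℝ} (hκ : 0 < κ) : layerConst κ < ∞ := by
  have h1 : (2 : ℝ≥0∞) ^ (-κ) < 1 :=
    ENNReal.rpow_lt_one_of_one_lt_of_neg (by norm_num) (by linarith)
  have h2 : (1 - (2 : ℝ≥0∞) ^ (-κ))⁻¹ ≠ ∞ := by
    rw [ENNReal.inv_ne_top]
    exact (tsub_pos_of_lt h1).ne'
  have h3 : (2 : ℝ≥0∞) ^ κ ≠ ∞ := ENNReal.rpow_ne_top_of_nonneg hκ.le (by norm_num)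
  exact ENNReal.add_lt_top.2 ⟨by norm_num, ENNReal.mul_lt_top h3.lt_top h2.lt_top⟩

lemma one_le_layerConst (κ : ℝ) : 1 ≤ layerConst κ := le_self_add

/-- A value `x` is below `A` or in one of the dyadic layers above `A`; in either case `x ^ (κ + 1)`
is bounded by the corresponding term. -/
lemma rpow_le_layers {κ : ℝ} (hκ : 0 < κ) {A : ℝ≥0∞} (hA : A ≠ 0) (hA' : A ≠ ∞) (x : ℝ≥0∞) :
    x ^ (κ + 1) ≤ A ^ κ * x +
      ∑' n : ℕ, if 2 ^ n * A ≤ x then (2 ^ (n + 1) * A) ^ κ * x else 0 := by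
  have hx : x ^ (κ + 1) = x ^ κ * x := by
    rw [ENNReal.rpow_add_of_nonneg _ _ hκ.le zero_le_one, ENNReal.rpow_one]
  rcases le_total x A with h | h
  · rw [hx]
    exact le_add_right (by gcongr)
  rcases eq_or_ne x ∞ with rfl | hxt
  · have : A ^ κ ≠ 0 := by
      simp [ENNReal.rpow_eq_zero_iff, hA, hκ.le]
    rw [ENNReal.mul_top this]
    simp
  refine le_add_left ?_
  have hApos : 0 < A.toReal := ENNReal.toReal_pos hA hA'
  have h1 : 1 ≤ x.toReal / A.toReal := by
    rw [one_le_div hApos]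
    exact ENNReal.toReal_mono hxt h
  obtain ⟨n, hn1, hn2⟩ := exists_nat_pow_near h1 (one_lt_two)
  rw [le_div_iff₀ hApos] at hn1
  rw [div_lt_iff₀ hApos] at hn2
  have e : ∀ m : ℕ, ((2 : ℝ≥0∞) ^ m * A).toReal = 2 ^ m * A.toReal := by
    intro m; simp
  have et : ∀ m : ℕ, ((2 : ℝ≥0∞) ^ m * A) ≠ ∞ := fun m =>
    ENNReal.mul_ne_top (ENNReal.pow_ne_top (by norm_num)) hA'
  have k1 : 2 ^ n * A ≤ x := by
    rw [← ENNReal.toReal_le_toReal (et n) hxt, e]; exact hn1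
  have k2 : x ≤ 2 ^ (n + 1) * A := by
    rw [← ENNReal.toReal_le_toReal hxt (et (n + 1)), e]; exact hn2.le
  refine le_trans ?_ (ENNReal.le_tsum n)
  rw [if_pos k1, hx]
  gcongr

/-- Chebyshev's inequality combined with absolute continuity: on the level set `{f ≥ 2 ^ n A}`
the mass of `f` decays like `2 ^ (-n ε)`. -/
lemma setLIntegral_level_le {α : Type*} [MeasurableSpace α] {ν : Measure α} {S : Set α}
    (hS : MeasurableSet S) (hS0 : ν S ≠ 0) (hSt : ν S ≠ ∞) {f : α → ℝ≥0∞} (hf : Measurable f)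
    {A : ℝ≥0∞} (hA : A ≠ 0) (hA' : A ≠ ∞) {ε : ℝ} (hε : 0 < ε)
    (h : ∀ E ⊆ S, MeasurableSet E → ∫⁻ z in E, f z ∂ν ≤ ν S * A * (ν E / ν S) ^ ε) (n : ℕ) :
    ∫⁻ z in S ∩ {z | 2 ^ n * A ≤ f z}, f z ∂ν ≤ ν S * A * (2 ^ (-ε)) ^ n := by
  have hE : MeasurableSet (S ∩ {z | 2 ^ n * A ≤ f z}) :=
    hS.inter (measurableSet_le measurable_const hf)
  have h1 := h _ inter_subset_left hE
  set E := S ∩ {z | 2 ^ n * A ≤ f z} with hEdef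
  have hES : ν E / ν S ≤ 1 := by
    rw [ENNReal.div_le_iff hS0 hSt, one_mul]
    exact measure_mono inter_subset_left
  have h2 : 2 ^ n * A * ν E ≤ ∫⁻ z in E, f z ∂ν := by
    rw [← setLIntegral_const]
    exact setLIntegral_mono' hE fun z hz => hz.2
  have h3 : 2 ^ n * (ν E / ν S) ≤ 1 := by
    have h4 : ν S * A * (2 ^ n * (ν E / ν S)) ≤ ν S * A * 1 := by
      calc ν S * A * (2 ^ n * (ν E / ν S)) = 2 ^ n * A * (ν S * (ν E / ν S)) := by ring
        _ = 2 ^ n * A * ν E := by rw [ENNReal.mul_div_cancel hS0 hSt]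
        _ ≤ ν S * A * (ν E / ν S) ^ ε := h2.trans h1
        _ ≤ ν S * A * 1 := by
          gcongr
          exact ENNReal.rpow_le_one hES hε.le
    exact (ENNReal.mul_le_mul_iff_right (mul_ne_zero hS0 hA) (ENNReal.mul_ne_top hSt hA')).1 h4
  have h5 : ν E / ν S ≤ (2 ^ n)⁻¹ := by
    rw [ENNReal.le_inv_iff_mul_le, mul_comm]; exact h3
  refine h1.trans ?_
  gcongr
  calc (ν E / ν S) ^ ε ≤ ((2 ^ n)⁻¹) ^ ε := by gcongr
    _ = (2 ^ (-ε)) ^ n := by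
      rw [ENNReal.inv_rpow, ← ENNReal.rpow_neg, ← ENNReal.rpow_natCast, ← ENNReal.rpow_natCast,
        ← ENNReal.rpow_mul, ← ENNReal.rpow_mul]
      congr 1; ring

/-- Higher integrability from quantitative absolute continuity, on a fixed set of finite positive
measure. -/
lemma setLIntegral_rpow_le {α : Type*} [MeasurableSpace α] {ν : Measure α} {S : Set α}
    (hS : MeasurableSet S) (hS0 : ν S ≠ 0) (hSt : ν S ≠ ∞) {f : α → ℝ≥0∞} (hf : Measurable f)
    {A : ℝ≥0∞} {ε κ : ℝ} (hκ : 0 < κ) (hε : ε = 2 * κ)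
    (h : ∀ E ⊆ S, MeasurableSet E → ∫⁻ z in E, f z ∂ν ≤ ν S * A * (ν E / ν S) ^ ε) :
    ∫⁻ z in S, f z ^ (κ + 1) ∂ν ≤ ν S * (A ^ (κ + 1) * layerConst κ) := by
  have hε0 : 0 < ε := by linarith
  have hS1 : ∫⁻ z in S, f z ∂ν ≤ ν S * A := by
    simpa [ENNReal.div_self hS0 hSt] using h S subset_rfl hS
  rcases eq_or_ne A 0 with rfl | hA
  · -- here `f` vanishes a.e. on `S`
    have h0 : ∫⁻ z in S, f z ∂ν = 0 := by simpa using hS1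
    rw [lintegral_eq_zero_iff hf] at h0
    have : ∫⁻ z in S, f z ^ (κ + 1) ∂ν = 0 := by
      rw [lintegral_eq_zero_iff (hf.pow_const _)]
      filter_upwards [h0] with z hz
      simp only [Pi.zero_apply] at hz ⊢
      rw [hz, ENNReal.zero_rpow_of_pos (by linarith)]
    rw [this]; exact zero_le
  rcases eq_or_ne A ∞ with rfl | hA'
  · have h1 : layerConst κ ≠ 0 := (zero_lt_one.trans_le (one_le_layerConst κ)).ne'
    rw [ENNReal.top_rpow_of_pos (by linarith), ENNReal.top_mul h1, ENNReal.mul_top hS0]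
    exact le_top
  have hAκ : A ^ (κ + 1) = A ^ κ * A := by
    rw [ENNReal.rpow_add_of_nonneg _ _ hκ.le zero_le_one, ENNReal.rpow_one]
  have hlev : ∀ n : ℕ, MeasurableSet {z | 2 ^ n * A ≤ f z} := fun n =>
    measurableSet_le measurable_const hf
  have hterm : ∀ n : ℕ,
      ∫⁻ z in S, (if 2 ^ n * A ≤ f z then (2 ^ (n + 1) * A) ^ κ * f z else 0) ∂ν
        ≤ ν S * A ^ (κ + 1) * 2 ^ κ * (2 ^ (-κ)) ^ n := by
    intro n
    have e1 : (fun z => if 2 ^ n * A ≤ f z then (2 ^ (n + 1) * A) ^ κ * f z else 0) =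
        {z | 2 ^ n * A ≤ f z}.indicator (fun z => (2 ^ (n + 1) * A) ^ κ * f z) := by
      ext z; simp [indicator_apply]
    rw [e1, lintegral_indicator (hlev n), Measure.restrict_restrict (hlev n), inter_comm,
      lintegral_const_mul _ hf]
    have e2 : ((2 : ℝ≥0∞) ^ (n + 1) * A) ^ κ = 2 ^ κ * A ^ κ * (2 ^ κ) ^ n := by
      rw [ENNReal.mul_rpow_of_nonneg _ _ hκ.le, pow_succ, ENNReal.mul_rpow_of_nonneg _ _ hκ.le,
        ← ENNReal.rpow_natCast, ← ENNReal.rpow_mul, ← ENNReal.rpow_natCast, ← ENNReal.rpow_mul,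
        mul_comm (n : ℝ) κ]
      ring
    have e3 : ((2 : ℝ≥0∞) ^ κ) ^ n * (2 ^ (-ε)) ^ n = (2 ^ (-κ)) ^ n := by
      rw [← mul_pow, ← ENNReal.rpow_add _ _ (by norm_num) (by norm_num)]
      congr 2; linarith
    calc _ ≤ (2 ^ (n + 1) * A) ^ κ * (ν S * A * (2 ^ (-ε)) ^ n) := by
          gcongr
          exact setLIntegral_level_le hS hS0 hSt hf hA hA' hε0 h n
      _ = ν S * (A ^ κ * A) * 2 ^ κ * ((2 ^ κ) ^ n * (2 ^ (-ε)) ^ n) := by rw [e2]; ring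
      _ = _ := by rw [e3, hAκ]
  calc ∫⁻ z in S, f z ^ (κ + 1) ∂ν
      ≤ ∫⁻ z in S, (A ^ κ * f z +
          ∑' n : ℕ, if 2 ^ n * A ≤ f z then (2 ^ (n + 1) * A) ^ κ * f z else 0) ∂ν :=
        lintegral_mono fun z => rpow_le_layers hκ hA hA' (f z)
    _ = A ^ κ * ∫⁻ z in S, f z ∂ν + ∑' n : ℕ,
          ∫⁻ z in S, (if 2 ^ n * A ≤ f z then (2 ^ (n + 1) * A) ^ κ * f z else 0) ∂ν := by
        rw [lintegral_add_left (hf.const_mul _), lintegral_const_mul _ hf, lintegral_tsum]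
        exact fun n => (Measurable.ite (hlev n) (hf.const_mul _) measurable_const).aemeasurable
    _ ≤ A ^ κ * (ν S * A) + ∑' n : ℕ, ν S * A ^ (κ + 1) * 2 ^ κ * (2 ^ (-κ)) ^ n := by
        gcongr with n
        exact hterm n
    _ = ν S * (A ^ (κ + 1) * layerConst κ) := by
        rw [ENNReal.tsum_mul_left, ENNReal.tsum_geometric, hAκ, layerConst]
        ring

/-- Hölder's inequality against the constant function `1`. -/
lemma setLIntegral_le_rpow_mul {α : Type*} [MeasurableSpace α] (ν : Measure α) (E : Set α)
    {f : α → ℝ≥0∞} (hf : Measurable f) {κ : ℝ} (hκ : 0 < κ) :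
    ∫⁻ z in E, f z ∂ν ≤ (∫⁻ z in E, f z ^ (κ + 1) ∂ν) ^ (1 / (κ + 1)) * ν E ^ (κ / (κ + 1)) := by
  have hpq : (κ + 1).HolderConjugate ((κ + 1) / κ) := by
    rw [Real.holderConjugate_iff]
    refine ⟨by linarith, ?_⟩
    field_simp
    ring
  have := ENNReal.lintegral_mul_le_Lp_mul_Lq (ν.restrict E) hpq hf.aemeasurable
    (g := fun _ => 1) aemeasurable_const
  simpa using this

/-- Both halves of a parabolic rectangle have the same finite positive measure. -/
lemma rect_halves {X : Type*} [MeasurableSpace X] {d : QuasiMetric X} {μ : Measure X}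
    (hSHT : IsSHT d μ) (D : DyadicSystem X d) (p : ℝ) {τ : Fin D.K} {k : ℤ} {Q : Set X}
    (hQ : Q ∈ D.cubes τ k) (t : ℝ) :
    MeasurableSet (rectMinus D p Q k t 0) ∧
      (μ.prod volume) (rectMinus D p Q k t 0) ≠ 0 ∧
      (μ.prod volume) (rectMinus D p Q k t 0) ≠ ∞ ∧
      (μ.prod volume) (rectPlus D p Q k t 0) = (μ.prod volume) (rectMinus D p Q k t 0) := by
  obtain ⟨z, hz1, hz2⟩ := D.sandwich τ k Q hQ
  have hδ : 0 < D.δ ^ k := zpow_pos D.δ_pos k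
  have hσ : SigmaFinite μ := by
    refine ⟨⟨⟨fun n : ℕ => d.ball z (n + 1), fun _ => mem_univ _,
      fun n => hSHT.ball_lt_top z _ (by positivity), ?_⟩⟩⟩
    refine eq_univ_of_forall fun y => ?_
    obtain ⟨n, hn⟩ := exists_nat_gt (d.dist z y)
    exact mem_iUnion.2 ⟨n, show d.dist z y < n + 1 by linarith⟩
  have hQ0 : μ Q ≠ 0 :=
    ((hSHT.ball_pos z _ (mul_pos D.c₁_pos hδ)).trans_le (measure_mono hz1)).ne'
  have hQt : μ Q ≠ ∞ :=
    ((measure_mono hz2).trans_lt (hSHT.ball_lt_top z _ (mul_pos D.C₁_pos hδ))).ne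
  have hl : 0 < (D.δ ^ k) ^ p := Real.rpow_pos_of_pos hδ p
  have hm : (μ.prod volume) (rectMinus D p Q k t 0) = μ Q * ENNReal.ofReal ((D.δ ^ k) ^ p) := by
    rw [rectMinus, Measure.prod_prod, Real.volume_Ioo]
    congr 2; ring
  refine ⟨(D.measurableSet_cubes τ k Q hQ).prod measurableSet_Ioo, ?_, ?_, ?_⟩
  · rw [hm]
    exact mul_ne_zero hQ0 (ENNReal.ofReal_pos.2 hl).ne'
  · rw [hm]
    exact ENNReal.mul_ne_top hQt ENNReal.ofReal_ne_top
  · rw [hm, rectPlus, Measure.prod_prod, Real.volume_Ioo]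
    congr 2; ring

/-- Theorem 6.8: the reverse Hölder inequality on parabolic rectangles
is equivalent to a quantitative absolute-continuity condition. -/
theorem statement12 {X : Type*} [MeasurableSpace X] (d : QuasiMetric X) (μ : Measure X)
    (hSHT : IsSHT d μ) (D : DyadicSystem X d) (p : ℝ) (hp : 1 < p)
    (q : ℝ) (hq : 1 < q) (ω : X × ℝ → ℝ≥0∞) (hω : IsWeight d μ p ω) :
    (∃ κ : ℝ, 0 < κ ∧ ∃ C : ℝ≥0∞, 0 < C ∧ C < ∞ ∧
      ∀ (τ : Fin D.K) (k : ℤ) (Q : Set X), Q ∈ D.cubes τ k → ∀ t : ℝ,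
        lavg (μ.prod volume) (rectMinus D p Q k t 0)
            (fun z => ω z ^ (κ + 1)) ^ (1 / (κ + 1)) ≤
          C * lavg (μ.prod volume) (rectPlus D p Q k t 0) ω) ↔
    (∃ ε : ℝ, 0 < ε ∧ ∃ C : ℝ≥0∞, 0 < C ∧ C < ∞ ∧
      ∀ (τ : Fin D.K) (k : ℤ) (Q : Set X), Q ∈ D.cubes τ k → ∀ t : ℝ,
        ∀ E : Set (X × ℝ), E ⊆ rectMinus D p Q k t 0 → MeasurableSet E →
          ∫⁻ z in E, ω z ∂μ.prod volume ≤
            C * ((μ.prod volume) E / (μ.prod volume) (rectMinus D p Q k t 0)) ^ ε *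
              ∫⁻ z in rectPlus D p Q k t 0, ω z ∂μ.prod volume) := by
  constructor
  · rintro ⟨κ, hκ, C, hC0, hCt, h⟩
    refine ⟨κ / (κ + 1), by positivity, C, hC0, hCt, fun τ k Q hQ t E hE _ => ?_⟩
    obtain ⟨-, hm0, hmt, hpm⟩ := rect_halves hSHT D p hQ t
    have h1 := h τ k Q hQ t
    have h2 := setLIntegral_le_rpow_mul (μ.prod volume) E hω.measurable hκ
    rw [lavg, lavg, hpm] at h1
    set a := (μ.prod volume) (rectMinus D p Q k t 0) with ha
    set W := ∫⁻ z in rectPlus D p Q k t 0, ω z ∂μ.prod volume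
    have hκ1 : 0 ≤ 1 / (κ + 1) := by positivity
    have hκ2 : 0 ≤ κ / (κ + 1) := by positivity
    have h3 : (∫⁻ z in E, ω z ^ (κ + 1) ∂μ.prod volume) ^ (1 / (κ + 1)) ≤
        a ^ (1 / (κ + 1)) * (C * (W / a)) := by
      calc _ ≤ (∫⁻ z in rectMinus D p Q k t 0, ω z ^ (κ + 1) ∂μ.prod volume) ^ (1 / (κ + 1)) := by
            gcongr
        _ = a ^ (1 / (κ + 1)) *
            ((∫⁻ z in rectMinus D p Q k t 0, ω z ^ (κ + 1) ∂μ.prod volume) / a) ^ (1 / (κ + 1)) := by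
            rw [← ENNReal.mul_rpow_of_nonneg _ _ hκ1, ENNReal.mul_div_cancel hm0 hmt]
        _ ≤ _ := by gcongr
    have h4 : (μ.prod volume) E ^ (κ / (κ + 1)) =
        a ^ (κ / (κ + 1)) * ((μ.prod volume) E / a) ^ (κ / (κ + 1)) := by
      rw [← ENNReal.mul_rpow_of_nonneg _ _ hκ2, ENNReal.mul_div_cancel hm0 hmt]
    have h5 : a ^ (1 / (κ + 1)) * a ^ (κ / (κ + 1)) = a := by
      rw [← ENNReal.rpow_add_of_nonneg _ _ hκ1 hκ2, ← add_div, add_comm 1 κ,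
        div_self (by positivity), ENNReal.rpow_one]
    calc _ ≤ a ^ (1 / (κ + 1)) * (C * (W / a)) *
          (a ^ (κ / (κ + 1)) * ((μ.prod volume) E / a) ^ (κ / (κ + 1))) := by
          rw [← h4]
          exact h2.trans (by gcongr)
      _ = C * ((μ.prod volume) E / a) ^ (κ / (κ + 1)) *
          ((a ^ (1 / (κ + 1)) * a ^ (κ / (κ + 1))) * (W / a)) := by ring
      _ = _ := by rw [h5, ENNReal.mul_div_cancel hm0 hmt]
  · rintro ⟨ε, hε, C, hC0, hCt, h⟩
    set κ := ε / 2 with hκdef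
    have hκ : 0 < κ := by positivity
    have hK1 := one_le_layerConst κ
    have hκ1 : 0 ≤ 1 / (κ + 1) := by positivity
    refine ⟨κ, hκ, C * layerConst κ ^ (1 / (κ + 1)), ?_, ?_, fun τ k Q hQ t => ?_⟩
    · exact hC0.trans_le (le_mul_of_one_le_right zero_le (ENNReal.one_le_rpow hK1 (by positivity)))
    · exact ENNReal.mul_lt_top hCt
        (ENNReal.rpow_lt_top_of_nonneg hκ1 (layerConst_lt_top hκ).ne)
    obtain ⟨hmeas, hm0, hmt, hpm⟩ := rect_halves hSHT D p hQ t
    have key := setLIntegral_rpow_le hmeas hm0 hmt hω.measurable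
      (A := C * lavg (μ.prod volume) (rectPlus D p Q k t 0) ω) hκ
      (show ε = 2 * κ by rw [hκdef]; ring) (fun E hE hEm => by
        refine (h τ k Q hQ t E hE hEm).trans_eq ?_
        rw [lavg, hpm]
        conv_lhs => rw [← ENNReal.mul_div_cancel hm0 hmt
          (b := ∫⁻ z in rectPlus D p Q k t 0, ω z ∂μ.prod volume)]
        ring)
    rw [lavg]
    calc _ ≤ ((C * lavg (μ.prod volume) (rectPlus D p Q k t 0) ω) ^ (κ + 1) *
          layerConst κ) ^ (1 / (κ + 1)) := by
          gcongr
          exact ENNReal.div_le_of_le_mul' key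
      _ = _ := by
        rw [ENNReal.mul_rpow_of_nonneg _ _ hκ1, ← ENNReal.rpow_mul,
          mul_one_div_cancel (by positivity), ENNReal.rpow_one]
        ring
end

section
/- Let (X,ρ,μ) be a space of homogeneous type with the monotone geodesic property, fix p ∈ (1,∞), let ε₀ := δ^{⌊log_δ 2^{1/p}⌋ p}/2 (δ the dyadic scale parameter), let γ ∈ [0, 1/ε₀), and let ω ∈ A₁^+(γ). Then: (i) if γ = 0, then for every q ∈ (1,∞) and every γ' ∈ [0,1), A₁^+(0) ⊂ A_q^+(γ'); (ii) if γ ≠ 0, then for every q ∈ (1,∞) and every γ' ∈ (0,1), A₁^+(γ) ⊂ A_q^+(γ'). -/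
/-!
The maximal function defining `A_1^+(γ)` is taken over all parabolic rectangles `P` containing the
point, not only those whose upper part contains it. Given a cylinder `R = R(x,t,l)`, one rectangle
is therefore enough: if `Q ⊇ B(x,l)` is a dyadic cube of level `k` and `h = δ^{kp}` satisfies
`l^p ≤ (1 - γ) h`, then the rectangle `P` over `Q` centred at time `t + h - l^p` satisfies
`R^-(γ') ⊆ P^-(γ)` and `R^+(γ') ⊆ P`. If moreover `h ≲ l^p` and `μ(Q) ≲ μ(B(x,l))`, the average of
`ω` over `R^-(γ')` is at most a constant times `ω` at almost every point of `R^+(γ')`, and the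
`A_q^+(γ')` bound follows because `(1 - q')(q - 1) = -1`.

Two points need an argument. The inequality `γ < 1` holds because `log_δ 2^{1/p} < 0` has floor at
most `-1`, so that `ε₀ ≥ δ^{-p} / 2 ≥ 1`. A cube of the right level exists
(`exists_comparable_cube`) because annuli of a fixed ratio are nonempty (`exists_mem_annulus`), a
consequence of infinite diameter and the monotone geodesic property; this turns inclusions between
cubes and balls into comparisons of radii.
-/


open MeasureTheory Set Filter
open scoped ENNReal NNReal

/-! ### Geometry of the quasi-metric space -/

theorem IsSHT.exists_far {X : Type*} [MeasurableSpace X] {d : QuasiMetric X} {μ : Measure X}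
    (h : IsSHT d μ) (x : X) (r : ℝ) : ∃ y, r < d.dist x y := by
  obtain ⟨a, b, hab⟩ := h.diam_infinite (2 * d.K0 * r)
  by_contra! hc
  have h1 := d.dist_triangle a b x
  have h2 := hc a
  have h3 := hc b
  have hK := d.one_le_K0
  rw [d.dist_symm a x] at h1
  nlinarith

/-- Annuli of a fixed ratio are nonempty: a monotone geodesic chain leading from `x` to a far away
point cannot jump over such an annulus. -/
theorem exists_mem_annulus {X : Type*} [MeasurableSpace X] {d : QuasiMetric X} {μ : Measure X}
    (h : IsSHT d μ) (hMG : d.MonotoneGeodesic) :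
    ∃ A : ℝ, 0 < A ∧ ∀ (x : X) (r : ℝ), 0 < r → ∃ y, r ≤ d.dist x y ∧ d.dist x y < A * r := by
  obtain ⟨Kt, hKt, H⟩ := hMG
  have hK := d.one_le_K0
  refine ⟨d.K0 * (1 + Kt), by positivity, fun x r hr => ?_⟩
  obtain ⟨y, hy⟩ := h.exists_far x r
  obtain ⟨m, hm, c, hc0, hcm, hc⟩ := H r hr x y hy.le
  classical
  have hex : ∃ i, r ≤ d.dist x (c i) := ⟨m, by rw [hcm]; exact hy.le⟩
  have hfm : Nat.find hex ≤ m := Nat.find_min' hex (by rw [hcm]; exact hy.le)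
  have hspec := Nat.find_spec hex
  have hmin : ∀ j, j < Nat.find hex → ¬ r ≤ d.dist x (c j) := fun j hj => Nat.find_min hex hj
  rcases hn : Nat.find hex with _ | j
  · rw [hn, hc0, (d.dist_eq_zero_iff x x).2 rfl] at hspec
    linarith
  · rw [hn] at hspec hfm
    have h1 := hmin j (by omega)
    have h2 := (hc j (by omega)).1
    have h3 := d.dist_triangle x (c (j + 1)) (c j)
    refine ⟨c (j + 1), hspec, ?_⟩
    push Not at h1
    nlinarith

theorem IsSHT.sigmaFinite {X : Type*} [MeasurableSpace X] {d : QuasiMetric X} {μ : Measure X}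
    (h : IsSHT d μ) : SigmaFinite μ := by
  obtain ⟨x, -, -⟩ := h.diam_infinite 0
  refine ⟨⟨⟨fun n => d.ball x (n + 1), fun _ => mem_univ _,
    fun n => h.ball_lt_top x _ (by positivity), ?_⟩⟩⟩
  refine eq_univ_of_forall fun y => mem_iUnion.2 ?_
  obtain ⟨n, hn⟩ := exists_nat_gt (d.dist x y)
  exact ⟨n, show d.dist x y < n + 1 by linarith⟩

theorem IsSHT.exists_dilate {X : Type*} [MeasurableSpace X] {d : QuasiMetric X} {μ : Measure X}
    (h : IsSHT d μ) (M : ℝ) :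
    ∃ C : ℝ≥0∞, 0 < C ∧ C < ∞ ∧ ∀ x r, 0 < r → μ (d.ball x (M * r)) ≤ C * μ (d.ball x r) := by
  obtain ⟨C, hC1, hCt, hC⟩ := h.doubling
  obtain ⟨N, hN⟩ := pow_unbounded_of_one_lt M (one_lt_two : (1 : ℝ) < 2)
  have key : ∀ n : ℕ, ∀ x r, 0 < r → μ (d.ball x (2 ^ n * r)) ≤ C ^ n * μ (d.ball x r) := by
    intro n
    induction n with
    | zero => intro x r _; simp
    | succ n ih =>
      intro x r hr
      calc μ (d.ball x (2 ^ (n + 1) * r)) = μ (d.ball x (2 * (2 ^ n * r))) := by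
            congr 2; ring
        _ ≤ C * μ (d.ball x (2 ^ n * r)) := hC _ _ (by positivity)
        _ ≤ C * (C ^ n * μ (d.ball x r)) := by gcongr; exact ih x r hr
        _ = C ^ (n + 1) * μ (d.ball x r) := by ring
  refine ⟨C ^ N, pos_of_ne_zero (pow_ne_zero _ (one_pos.trans_le hC1).ne'),
    ENNReal.pow_lt_top hCt, fun x r hr => (measure_mono ?_).trans (key N x r hr)⟩
  intro y hy
  exact lt_of_lt_of_le (show d.dist x y < M * r from hy) (by gcongr)

/-- Every ball `B(x,l)` lies in a dyadic cube of comparable measure whose scale `δ^k` is comparable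
to `l`, and is at least a prescribed multiple `H * l` of it. -/
theorem exists_comparable_cube {X : Type*} [MeasurableSpace X] {d : QuasiMetric X} {μ : Measure X}
    (h : IsSHT d μ) (hMG : d.MonotoneGeodesic) (D : DyadicSystem X d) (H : ℝ) :
    ∃ (C : ℝ≥0∞) (C₂ : ℝ), 0 < C ∧ C < ∞ ∧ 0 < C₂ ∧ ∀ (x : X) (l : ℝ), 0 < l →
      ∃ τ k Q, Q ∈ D.cubes τ k ∧ d.ball x l ⊆ Q ∧ μ Q ≤ C * μ (d.ball x l) ∧
        H * l ≤ D.δ ^ k ∧ D.δ ^ k ≤ C₂ * l := by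
  obtain ⟨A, hA, hann⟩ := exists_mem_annulus h hMG
  have hK := d.one_le_K0
  have hC₁ := D.C₁_pos
  have hc₁ := D.c₁_pos
  have hcov := D.covC_pos
  -- Enlarging the ball by the factor `M` before covering it forces `H * l ≤ δ ^ k`.
  set M : ℝ := max 1 (2 * d.K0 * D.C₁ * A * H) with hM
  have hM1 : 1 ≤ M := le_max_left _ _
  have hM2 : 2 * d.K0 * D.C₁ * A * H ≤ M := le_max_right _ _
  obtain ⟨C, hC0, hCt, hC⟩ := h.exists_dilate (D.covC * M + 1)
  refine ⟨C, A * D.covC * M / D.c₁, hC0, hCt, by positivity, fun x l hl => ?_⟩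
  have hMl : 0 < M * l := by positivity
  obtain ⟨τ, k, Q, hQ, hBQ, hdiam⟩ := D.ball_subset_cube x (M * l) hMl
  obtain ⟨z, hzQ, hQz⟩ := D.sandwich τ k Q hQ
  have hδ : 0 < D.δ ^ k := zpow_pos D.δ_pos k
  have hxx : ∀ w, d.dist w w = 0 := fun w => (d.dist_eq_zero_iff w w).2 rfl
  have hxQ : x ∈ Q := hBQ (show d.dist x x < M * l by rw [hxx]; exact hMl)
  have hzz : z ∈ Q := hzQ (show d.dist z z < D.c₁ * D.δ ^ k by rw [hxx]; positivity)
  refine ⟨τ, k, Q, hQ, ?_, ?_, ?_, ?_⟩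
  · intro y hy
    have hy' : d.dist x y < l := hy
    exact hBQ (show d.dist x y < M * l by nlinarith)
  · refine (measure_mono fun y hy => ?_).trans (hC x l hl)
    have := hdiam x hxQ y hy
    show d.dist x y < (D.covC * M + 1) * l
    nlinarith
  · obtain ⟨y, hy1, hy2⟩ := hann x (M * l / A) (by positivity)
    have hyQ : y ∈ Q := hBQ (show d.dist x y < M * l by
      rwa [mul_div_cancel₀ _ hA.ne'] at hy2)
    have h1 : d.dist z x < D.C₁ * D.δ ^ k := hQz hxQ
    have h2 : d.dist z y < D.C₁ * D.δ ^ k := hQz hyQ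
    have h3 := d.dist_triangle x y z
    rw [d.dist_symm x z] at h3
    have h4 : M * l / A ≤ 2 * d.K0 * D.C₁ * D.δ ^ k := by nlinarith
    rw [div_le_iff₀ hA] at h4
    have h5 : 2 * d.K0 * D.C₁ * A * H * l ≤ M * l := by gcongr
    have h6 : 0 < 2 * d.K0 * D.C₁ * A := by positivity
    refine le_of_mul_le_mul_left ?_ h6
    nlinarith
  · obtain ⟨y, hy1, hy2⟩ := hann z (D.c₁ * D.δ ^ k / A) (by positivity)
    have hyQ : y ∈ Q := hzQ (show d.dist z y < D.c₁ * D.δ ^ k by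
      rwa [mul_div_cancel₀ _ hA.ne'] at hy2)
    have h1 := hy1.trans (hdiam z hzz y hyQ)
    rw [div_le_iff₀ hA] at h1
    rw [div_mul_eq_mul_div, le_div_iff₀ hc₁]
    nlinarith

/-! ### Averages -/

theorem lavg_le_mul_lavg {α : Type*} [MeasurableSpace α] {ν : Measure α} {E F : Set α}
    (f : α → ℝ≥0∞) {K : ℝ≥0∞} (hEF : E ⊆ F) (hE : ν E ≠ 0) (hF : ν F ≠ ∞)
    (hK : ν F ≤ K * ν E) : lavg ν E f ≤ K * lavg ν F f := by
  have hF0 : ν F ≠ 0 := fun h => hE (measure_mono_null hEF h)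
  have hEt : ν E ≠ ∞ := ne_top_of_le_ne_top hF (measure_mono hEF)
  unfold lavg
  refine ENNReal.div_le_of_le_mul ?_
  calc ∫⁻ z in E, f z ∂ν ≤ ∫⁻ z in F, f z ∂ν := lintegral_mono_set hEF
    _ = (∫⁻ z in F, f z ∂ν) / ν F * ν F := (ENNReal.div_mul_cancel hF0 hF).symm
    _ ≤ (∫⁻ z in F, f z ∂ν) / ν F * (K * ν E) := by gcongr
    _ = K * ((∫⁻ z in F, f z ∂ν) / ν F) * ν E := by ring

/-- The `A_1`-type bound `a ≤ K ω` a.e. on `E` gives the `A_q` bound for the pair `a`, `E`. The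
degenerate values `a = 0` and `a = ∞` are covered by the conventions of `ℝ≥0∞`. -/
theorem mul_lavg_rpow_le {α : Type*} [MeasurableSpace α] {ν : Measure α} {E : Set α}
    (hE : MeasurableSet E) (ω : α → ℝ≥0∞) {a K : ℝ≥0∞} {q : ℝ} (hq : 1 < q)
    (h : ∀ᵐ z ∂ν, z ∈ E → a ≤ K * ω z) (hK0 : K ≠ 0) (hKt : K ≠ ∞) :
    a * lavg ν E (fun z => ω z ^ (1 - conjExp q)) ^ (q - 1) ≤ K := by
  have hq1 : 0 < q - 1 := by linarith
  have hexp : 1 - conjExp q = -(1 / (q - 1)) := by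
    unfold conjExp; field_simp; ring
  have hb : lavg ν E (fun z => ω z ^ (1 - conjExp q)) ≤ (a / K) ^ (1 - conjExp q) := by
    refine ENNReal.div_le_of_le_mul ?_
    rw [← setLIntegral_const]
    refine setLIntegral_mono_ae' hE ?_
    filter_upwards [h] with z hz hzE
    have h1 : a / K ≤ ω z := ENNReal.div_le_of_le_mul' (hz hzE)
    rw [hexp, ENNReal.rpow_neg, ENNReal.rpow_neg]
    exact ENNReal.inv_le_inv.2 (ENNReal.rpow_le_rpow h1 (by positivity))
  calc a * lavg ν E (fun z => ω z ^ (1 - conjExp q)) ^ (q - 1)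
      ≤ a * ((a / K) ^ (1 - conjExp q)) ^ (q - 1) := by gcongr
    _ = a * (a / K)⁻¹ := by
        have h1 : (1 - conjExp q) * (q - 1) = -1 := by
          rw [hexp]; field_simp
        rw [← ENNReal.rpow_mul, h1, ENNReal.rpow_neg_one]
    _ = a * (K / a) := by rw [ENNReal.inv_div (Or.inl hKt) (Or.inl hK0)]
    _ ≤ K := ENNReal.mul_div_le

/-! ### The inclusion of classes -/

/-- The inclusion holds for all `γ, γ' ∈ [0,1)`. -/
theorem A1Plus_subset_AqPlus {X : Type*} [MeasurableSpace X] {d : QuasiMetric X} {μ : Measure X}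
    (hSHT : IsSHT d μ) (hMG : d.MonotoneGeodesic) (D : DyadicSystem X d) {p γ γ' q : ℝ}
    (hp : 1 < p) (hγ0 : 0 ≤ γ) (hγ1 : γ < 1) (hγ'0 : 0 ≤ γ') (hγ'1 : γ' < 1) (hq : 1 < q) :
    A1Plus D μ p γ ⊆ AqPlus d μ p γ' q := by
  rintro ω ⟨hw, C, hC0, hCt, hC⟩
  refine ⟨hw, ?_⟩
  have := hSHT.sigmaFinite
  have hγp : 0 < 1 - γ := by linarith
  have hγ'p : 0 < 1 - γ' := by linarith
  have hH1 : 1 ≤ 1 / (1 - γ) := by rw [le_div_iff₀ hγp]; linarith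
  obtain ⟨C', C₂, hC'0, hC't, hC₂, hcube⟩ :=
    exists_comparable_cube hSHT hMG D (1 / (1 - γ))
  set K₁ : ℝ≥0∞ := C' * ENNReal.ofReal (C₂ ^ p / (1 - γ')) with hK₁
  have hK₁0 : K₁ ≠ 0 :=
    mul_ne_zero hC'0.ne' (ENNReal.ofReal_pos.2 (by positivity)).ne'
  have hK₁t : K₁ ≠ ∞ := ENNReal.mul_ne_top hC't.ne ENNReal.ofReal_ne_top
  have hKt : K₁ * C ≠ ∞ := ENNReal.mul_ne_top hK₁t hCt.ne
  refine lt_of_le_of_lt ?_ hKt.lt_top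
  refine iSup_le fun x => iSup_le fun t => iSup_le fun l => iSup_le fun hl => ?_
  obtain ⟨τ, k, Q, hQ, hBQ, hμQ, hlow, hup⟩ := hcube x l hl
  have hδ : 0 < D.δ ^ k := zpow_pos D.δ_pos k
  set L : ℝ := l ^ p with hL
  set h : ℝ := (D.δ ^ k) ^ p with hh
  have hLpos : 0 < L := Real.rpow_pos_of_pos hl p
  have hhpos : 0 < h := Real.rpow_pos_of_pos hδ p
  have hLh : L ≤ (1 - γ) * h := by
    have h1 : (1 / (1 - γ)) ^ p * L ≤ h := by
      rw [hL, hh, ← Real.mul_rpow (by positivity) hl.le]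
      exact Real.rpow_le_rpow (by positivity) hlow (by linarith)
    have h2 : 1 / (1 - γ) ≤ (1 / (1 - γ)) ^ p := by
      simpa using Real.rpow_le_rpow_of_exponent_le hH1 hp.le
    have h3 : 1 / (1 - γ) * L ≤ h := (mul_le_mul_of_nonneg_right h2 hLpos.le).trans h1
    rw [div_mul_eq_mul_div, div_le_iff₀ hγp] at h3
    linarith
  have hhL : h ≤ C₂ ^ p * L := by
    rw [hL, hh, ← Real.mul_rpow hC₂.le hl.le]
    exact Real.rpow_le_rpow hδ.le hup (by linarith)
  have hL1 : L ≤ h := by nlinarith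
  -- The centre is chosen so that `P` and `R^-(γ')` start at the same time `t - l^p`.
  set s : ℝ := t + h - L with hs
  have hsub1 : cylMinus d p x t l γ' ⊆ rectMinus D p Q k s γ := by
    refine prod_mono hBQ (Ioo_subset_Ioo ?_ ?_)
    · show s - h ≤ t - L
      linarith
    · show t - γ' * L ≤ s - γ * h
      nlinarith
  have hsub2 : cylPlus d p x t l γ' ⊆ rect D p Q k s := by
    refine prod_mono hBQ (Ioo_subset_Ioo ?_ ?_)
    · show s - h ≤ t + γ' * L
      nlinarith
    · show t + L ≤ s + h
      linarith
  have hB0 := hSHT.ball_pos x l hl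
  have hBt := hSHT.ball_lt_top x l hl
  have hE : (μ.prod volume) (cylMinus d p x t l γ')
      = μ (d.ball x l) * ENNReal.ofReal ((1 - γ') * L) := by
    rw [cylMinus, Measure.prod_prod, Real.volume_Ioo]
    congr 2
    ring
  have hF : (μ.prod volume) (rectMinus D p Q k s γ) = μ Q * ENNReal.ofReal ((1 - γ) * h) := by
    rw [rectMinus, Measure.prod_prod, Real.volume_Ioo]
    congr 2
    ring
  have hQt : μ Q ≠ ∞ := ne_top_of_le_ne_top (ENNReal.mul_ne_top hC't.ne hBt.ne) hμQ
  have hratio : (μ.prod volume) (rectMinus D p Q k s γ)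
      ≤ K₁ * (μ.prod volume) (cylMinus d p x t l γ') := by
    rw [hE, hF, hK₁]
    calc μ Q * ENNReal.ofReal ((1 - γ) * h)
        ≤ (C' * μ (d.ball x l)) *
          ENNReal.ofReal (C₂ ^ p / (1 - γ') * ((1 - γ') * L)) := by
          refine mul_le_mul' hμQ (ENNReal.ofReal_le_ofReal ?_)
          have : C₂ ^ p / (1 - γ') * ((1 - γ') * L) = C₂ ^ p * L := by field_simp
          rw [this]
          nlinarith
      _ = _ := by
          rw [ENNReal.ofReal_mul (by positivity)]
          ring
  have hav := lavg_le_mul_lavg ω hsub1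
    (by rw [hE]; exact mul_ne_zero hB0.ne' (ENNReal.ofReal_pos.2 (by positivity)).ne')
    (by rw [hF]; exact ENNReal.mul_ne_top hQt ENNReal.ofReal_ne_top) hratio
  refine mul_lavg_rpow_le ((hSHT.measurableSet_ball x l).prod measurableSet_Ioo) ω hq ?_
    (mul_ne_zero hK₁0 hC0.ne') hKt
  filter_upwards [hC] with z hz hzE
  have hmax : lavg (μ.prod volume) (rectMinus D p Q k s γ) ω ≤ maxRectMinus D μ p γ ω z :=
    le_iSup_of_le τ <| le_iSup_of_le k <| le_iSup_of_le Q <| le_iSup_of_le hQ <|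
      le_iSup_of_le s <| le_iSup_of_le (hsub2 hzE) le_rfl
  calc _ ≤ K₁ * lavg (μ.prod volume) (rectMinus D p Q k s γ) ω := hav
    _ ≤ K₁ * (C * ω z) := by gcongr; exact hmax.trans hz
    _ = K₁ * C * ω z := (mul_assoc _ _ _).symm

theorem one_le_eps {δ p : ℝ} (hδ : 0 < δ) (hδ' : 2 * δ ≤ 1) (hp : 1 < p) :
    1 ≤ δ ^ ((⌊Real.logb δ ((2 : ℝ) ^ (1 / p))⌋ : ℝ) * p) / 2 := by
  have hδ1 : δ < 1 := by linarith
  have hlog : Real.logb δ ((2 : ℝ) ^ (1 / p)) < 0 :=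
    Real.logb_neg_of_base_lt_one hδ hδ1 (Real.one_lt_rpow one_lt_two (by positivity))
  have hfl : ⌊Real.logb δ ((2 : ℝ) ^ (1 / p))⌋ ≤ -1 := by
    have : ⌊Real.logb δ ((2 : ℝ) ^ (1 / p))⌋ < 0 := Int.floor_lt.2 (by simpa using hlog)
    omega
  have hfl' : (⌊Real.logb δ ((2 : ℝ) ^ (1 / p))⌋ : ℝ) ≤ -1 := by exact_mod_cast hfl
  have h1 : δ ^ (-1 : ℝ) ≤ δ ^ ((⌊Real.logb δ ((2 : ℝ) ^ (1 / p))⌋ : ℝ) * p) :=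
    Real.rpow_le_rpow_of_exponent_ge hδ hδ1.le (by nlinarith)
  have h2 : (2 : ℝ) ≤ δ ^ (-1 : ℝ) := by
    rw [Real.rpow_neg_one, ← one_div, le_div_iff₀ hδ]
    exact hδ'
  linarith

/-- Proposition 7.3: the relation between the parabolic classes
`A_1^+(γ)` and `A_q^+(γ')`. -/
theorem statement14 {X : Type*} [MeasurableSpace X] (d : QuasiMetric X) (μ : Measure X)
    (hSHT : IsSHT d μ) (hMG : d.MonotoneGeodesic) (D : DyadicSystem X d)
    (p : ℝ) (hp : 1 < p) (ε₀ : ℝ)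
    (hε₀ : ε₀ = D.δ ^ ((⌊Real.logb D.δ ((2 : ℝ) ^ (1 / p))⌋ : ℝ) * p) / 2)
    (γ : ℝ) (hγ0 : 0 ≤ γ) (hγ1 : γ < 1 / ε₀)
    (ω : X × ℝ → ℝ≥0∞) (hω : ω ∈ A1Plus D μ p γ) :
    (γ = 0 → ∀ q : ℝ, 1 < q → ∀ γ' : ℝ, 0 ≤ γ' → γ' < 1 →
      A1Plus D μ p 0 ⊆ AqPlus d μ p γ' q) ∧
    (γ ≠ 0 → ∀ q : ℝ, 1 < q → ∀ γ' : ℝ, 0 < γ' → γ' < 1 →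
      A1Plus D μ p γ ⊆ AqPlus d μ p γ' q) := by
  have hδ : 2 * D.δ ≤ 1 := by
    have h1 : 1 ≤ d.K0 ^ 6 := one_le_pow₀ d.one_le_K0
    have h2 := D.δ_small
    have h3 := D.δ_pos
    nlinarith
  have hε : 1 ≤ ε₀ := hε₀ ▸ one_le_eps D.δ_pos hδ hp
  have hγ : γ < 1 := hγ1.trans_le (by rw [div_le_one (by linarith)]; exact hε)
  exact ⟨fun _ q hq γ' h0 h1 =>
      A1Plus_subset_AqPlus hSHT hMG D hp le_rfl one_pos h0 h1 hq,
    fun _ q hq γ' h0 h1 =>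
      A1Plus_subset_AqPlus hSHT hMG D hp hγ0 hγ h0.le h1 hq⟩
end
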